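/- Let P = A ∪ B be an ℓ-divided set of points in the plane in general position with no ℓ-divided 5-hole in P, with |A| = 5, 4 ≤ |B| ≤ 6, and with A in convex position. Then for every point a of A, every convex a-wedge contains at most two points of B. -/

import Mathlib

noncomputable section

/-- Points of the plane. -/
abbrev Pt : Type := ℝ × ℝ

/-- The cross product (signed area) of two planar vectors. -/
def cross2 (u v : Pt) : ℝ := u.1 * v.2 - u.2 * v.1

/-- The dot product of two planar vectors. -/
def dotp (v p : Pt) : ℝ := v.1 * p.1 + v.2 * p.2

/-- A set of points in the plane is in general position if no three of its points
are collinear. -/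
def GenPos (P : Set Pt) : Prop :=
  ∀ p ∈ P, ∀ q ∈ P, ∀ r ∈ P, p ≠ q → p ≠ r → q ≠ r →
    ¬ Collinear ℝ ({p, q, r} : Set Pt)

/-- A set of points is in convex position if no point of the set lies in the convex
hull of the other points. -/
def ConvexPos (S : Set Pt) : Prop :=
  ∀ p ∈ S, p ∉ convexHull ℝ (S \ {p})

/-- `H` is a `k`-hole in `P`: a subset of `P` of size `k` in convex position whose
convex hull contains no point of `P \ H`. -/
def IsKHole (k : ℕ) (P H : Finset Pt) : Prop :=
  H ⊆ P ∧ H.card = k ∧ ConvexPos (↑H : Set Pt) ∧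
    ∀ p ∈ P, p ∉ H → p ∉ convexHull ℝ (↑H : Set Pt)

/-- The number of `k`-holes in `P`. -/
def numKHoles (k : ℕ) (P : Finset Pt) : ℕ :=
  Set.ncard {H : Finset Pt | IsKHole k P H}

/-- For an `ℓ`-divided set `P = A ∪ B`, an `ℓ`-divided 5-hole is a 5-hole in `A ∪ B`
containing points of both `A` and `B`. -/
def DividedFiveHole (A B H : Finset Pt) : Prop :=
  IsKHole 5 (A ∪ B) H ∧ (↑H ∩ ↑A : Set Pt).Nonempty ∧ (↑H ∩ ↑B : Set Pt).Nonempty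

/-- `x` is an extremal point of `P`: it lies on the boundary of the convex hull of `P`. -/
def OnHullBoundary (P : Finset Pt) (x : Pt) : Prop :=
  x ∈ frontier (convexHull ℝ (↑P : Set Pt))

/-- An `ℓ`-divided set `C = A ∪ B` is `ℓ`-critical if neither part is in convex position
and, for every extremal point `x` of `C`, one of the sets `(C \ {x}) ∩ A` and
`(C \ {x}) ∩ B` is in convex position. -/
def LCritical (A B : Finset Pt) : Prop :=
  ¬ ConvexPos (↑A : Set Pt) ∧ ¬ ConvexPos (↑B : Set Pt) ∧
    ∀ x ∈ A ∪ B, OnHullBoundary (A ∪ B) x →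
      (ConvexPos (↑(A.erase x) : Set Pt) ∨ ConvexPos (↑(B.erase x) : Set Pt))

/-- The closed wedge with apex `a` swept clockwise from the ray `a→p` to the ray `a→q`.
If the clockwise angle from `a→p` to `a→q` is at most `π` the wedge is convex, otherwise
it is the corresponding reflex region. -/
def Wedge (a p q : Pt) : Set Pt :=
  if cross2 (p - a) (q - a) ≤ 0 then
    {x | cross2 (p - a) (x - a) ≤ 0 ∧ 0 ≤ cross2 (q - a) (x - a)}
  else
    {x | cross2 (p - a) (x - a) ≤ 0 ∨ 0 ≤ cross2 (q - a) (x - a)}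

/-- `W` is an `a`-wedge of `A`: one of the closed regions into which the rays from `a`
through the other points of `A` partition the plane, i.e. a wedge spanned by two
points of `A \ {a}` that are angularly consecutive around `a` (no other point of `A`
lies in the wedge). -/
def IsAWedge (A : Finset Pt) (a : Pt) (W : Set Pt) : Prop :=
  ∃ p ∈ A.erase a, ∃ q ∈ A.erase a, p ≠ q ∧ W = Wedge a p q ∧
    (↑A : Set Pt) ∩ Wedge a p q ⊆ {a, p, q}

/-- The combinatorial data of the `a*`-wedges of an `ℓ`-divided set `P = A ∪ B`, where
`ℓ` is the vertical line `x = x0` and `A` lies to its left: `aStar` is the rightmost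
interior point `a*` of `A`; `lbl` is the clockwise cyclic labeling `a_0, a_1, …` of
`A \ {a*}` (period `|A| - 1`), so that the `k`-th wedge `W_k` is swept clockwise from
the ray through `lbl (k-1)` to the ray through `lbl k` and contains no other point
of `A`; the wedges `W_1, …, W_t` are exactly those meeting `ℓ`, in top-to-bottom
order along `ℓ`. -/
structure StarSetup (x0 : ℝ) (A : Finset Pt) where
  aStar : Pt
  lbl : ℕ → Pt
  t : ℕ
  aStar_mem : aStar ∈ A
  aStar_interior : aStar ∈ interior (convexHull ℝ (↑A : Set Pt))
  aStar_rightmost : ∀ p ∈ A, p ∈ interior (convexHull ℝ (↑A : Set Pt)) → p.1 ≤ aStar.1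
  lbl_mem : ∀ k, lbl k ∈ A.erase aStar
  lbl_periodic : ∀ k, lbl (k + (A.card - 1)) = lbl k
  lbl_bij : ∀ p ∈ A.erase aStar, ∃! k, k ∈ Finset.Icc 1 (A.card - 1) ∧ lbl k = p
  consec : ∀ k ∈ Finset.Icc 1 (A.card - 1),
    (↑A : Set Pt) ∩ Wedge aStar (lbl (k - 1)) (lbl k) ⊆ {aStar, lbl (k - 1), lbl k}
  t_pos : 1 ≤ t
  t_le : t ≤ A.card - 1
  inter_iff : ∀ k ∈ Finset.Icc 1 (A.card - 1),
    ((Wedge aStar (lbl (k - 1)) (lbl k)) ∩ {p : Pt | p.1 = x0}).Nonempty ↔ k ≤ t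
  ordered : ∀ k ∈ Finset.Icc 1 t, ∀ k' ∈ Finset.Icc 1 t, k < k' →
    ∀ p ∈ (Wedge aStar (lbl (k - 1)) (lbl k)) ∩ {q : Pt | q.1 = x0},
    ∀ p' ∈ (Wedge aStar (lbl (k' - 1)) (lbl k')) ∩ {q : Pt | q.1 = x0},
      p'.2 ≤ p.2

/-- The `k`-th `a*`-wedge `W_k`. -/
def StarSetup.W {x0 : ℝ} {A : Finset Pt} (S : StarSetup x0 A) (k : ℕ) : Set Pt :=
  Wedge S.aStar (S.lbl (k - 1)) (S.lbl k)

/-- `w_k`, the number of points of `B` in the `k`-th `a*`-wedge. -/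
def StarSetup.w {x0 : ℝ} {A : Finset Pt} (S : StarSetup x0 A) (B : Finset Pt) (k : ℕ) : ℕ :=
  Set.ncard ((↑B : Set Pt) ∩ S.W k)

/-!
If a 4-hole of `P` has vertices in both `A` and `B`, then no point of `P` lies in the cap beyond
one of its edges: the point of the cap nearest to that edge would complete a divided 5-hole.

Suppose that the angle at the vertex `o` over the edge `p q` of the pentagon `A` contains three
points of `B`. Let `b` be the one nearest to `p q`, and let `c`, `d` be the last two of the others
around `p`, in the order for which `b c d` is counterclockwise. The caps of the 4-holes `o p b q`,
`p c d b` and, if it is convex, `b c d q` yield a contradiction when `A` has vertices on both sides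
of the angle. Otherwise the pentagon is, up to reflection, `o p q r s`. If `s r d c` is a 4-hole,
its caps leave no room for a fourth point of `B`. If neither `s r d c` nor `b d r q` is one, take
the points `y` and `x` of `B` inside them that are nearest to `d r`; then `b d y q` is a 4-hole with
`x` in a cap. The remaining case, in which only `b d r q` is a 4-hole, is excluded because `y` lies
in a cap of it.
-/

section Orientation

/-- Twice the signed area of the triangle `p q r`, scaled by `ε`. Reversing the sign of `ε`
reflects the plane, so statements valid for every `ε` come with their mirror images. -/
def signedArea (ε : ℝ) (p q r : Pt) : ℝ := ε * cross2 (q - p) (r - p)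

/-- The triangle `p q r` is counterclockwise with respect to the area form scaled by `ε`. -/
def Ccw (ε : ℝ) (p q r : Pt) : Prop := 0 < signedArea ε p q r

/-- The point `x` lies in the open counterclockwise triangle `p q r`. -/
def InTriangle (ε : ℝ) (p q r x : Pt) : Prop := Ccw ε p q x ∧ Ccw ε q r x ∧ Ccw ε r p x

variable {ε : ℝ} {p q r s t x : Pt}

theorem signedArea_rotate : signedArea ε q r p = signedArea ε p q r := by
  simp only [signedArea, cross2, Prod.fst_sub, Prod.snd_sub]; ring

theorem signedArea_swap : signedArea ε p r q = -signedArea ε p q r := by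
  simp only [signedArea, cross2]; ring

@[simp] theorem signedArea_self_right : signedArea ε p q q = 0 := by
  simp only [signedArea, cross2]; ring

@[simp] theorem signedArea_self_outer : signedArea ε p q p = 0 := by
  simp [signedArea, cross2]

theorem signedArea_split :
    signedArea ε p q x + signedArea ε q r x + signedArea ε r p x = signedArea ε p q r := by
  simp only [signedArea, cross2, Prod.fst_sub, Prod.snd_sub]; ring

theorem signedArea_plucker : signedArea ε t s q * signedArea ε t p r =
    signedArea ε t s p * signedArea ε t q r + signedArea ε t s r * signedArea ε t p q := by
  simp only [signedArea, cross2]; ring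

theorem ccw_rotate : Ccw ε p q r ↔ Ccw ε q r p := by
  rw [Ccw, Ccw, signedArea_rotate (p := p)]

@[grind →] theorem Ccw.rotate (h : Ccw ε p q r) : Ccw ε q r p := ccw_rotate.1 h

@[grind →] theorem Ccw.not_swap (h : Ccw ε p q r) : ¬ Ccw ε p r q := by
  rw [Ccw] at *; rw [signedArea_swap]; linarith

theorem ccw_neg : Ccw (-ε) p q r ↔ Ccw ε p r q := by
  rw [Ccw, Ccw, signedArea_swap (p := p) (q := q), signedArea, signedArea, neg_mul]

@[grind .] theorem not_ccw_self : ¬ Ccw ε p q q := by simp [Ccw]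

theorem Ccw.ne (h : Ccw ε p q r) : p ≠ q ∧ p ≠ r ∧ q ≠ r := by
  refine ⟨?_, ?_, ?_⟩ <;> rintro rfl
  exacts [not_ccw_self h.rotate.rotate, not_ccw_self h.rotate, not_ccw_self h]

theorem Ccw.of_inside (h₁ : Ccw ε p q x) (h₂ : Ccw ε q r x) (h₃ : Ccw ε r p x) :
    Ccw ε p q r := by
  rw [Ccw] at *; linarith [signedArea_split (ε := ε) (p := p) (q := q) (r := r) (x := x)]

theorem Ccw.trans (hp : Ccw ε t s p) (hq : Ccw ε t s q) (hr : Ccw ε t s r)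
    (hpq : Ccw ε t p q) (hqr : Ccw ε t q r) : Ccw ε t p r := by
  have : 0 < signedArea ε t s q * signedArea ε t p r := by
    rw [signedArea_plucker]; exact add_pos (mul_pos hp hqr) (mul_pos hr hpq)
  exact pos_of_mul_pos_right this hq.le

theorem Ccw.trans' (hp : Ccw ε s t p) (hq : Ccw ε s t q) (hr : Ccw ε s t r)
    (hpq : Ccw ε t p q) (hqr : Ccw ε t q r) : Ccw ε t p r := by
  rw [ccw_rotate, ← ccw_neg] at hp hq hr
  rw [← ccw_neg] at hpq hqr ⊢
  exact hr.trans hq hp hqr hpq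

theorem exists_empty_triangle (ε : ℝ) (p q : Pt) {S : Finset Pt} (hS : S.Nonempty) :
    ∃ y ∈ S, ∀ x ∈ S, ¬ InTriangle ε p q y x := by
  obtain ⟨y, hy, hmin⟩ := S.exists_min_image (signedArea ε p q) hS
  refine ⟨y, hy, fun x hx ⟨_, h₂, h₃⟩ ↦ ?_⟩
  rw [Ccw] at h₂ h₃
  linarith [hmin x hx, signedArea_split (ε := ε) (p := p) (q := q) (r := y) (x := x)]

theorem exists_last_around {S : Finset Pt} (hS : S.Nonempty) (h : ∀ x ∈ S, Ccw ε s t x) :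
    ∃ y ∈ S, ∀ x ∈ S, ¬ Ccw ε t y x := by
  induction hS using Finset.Nonempty.cons_induction with
  | singleton a => simp [not_ccw_self]
  | cons a S ha _ ih =>
    simp only [Finset.mem_cons, forall_eq_or_imp] at h
    obtain ⟨y, hy, hlast⟩ := ih h.2
    by_cases hya : Ccw ε t y a
    · refine ⟨a, by simp, fun x hx hax ↦ ?_⟩
      rcases Finset.mem_cons.1 hx with rfl | hx
      · exact not_ccw_self hax
      · exact hlast x hx ((h.2 y hy).trans' h.1 (h.2 x hx) hya hax)
    · exact ⟨y, by simp [hy], by simpa [hya] using hlast⟩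

theorem Ccw.of_inTriangle (hx : InTriangle ε p q r x) (hp : Ccw ε s t p) (hq : Ccw ε s t q)
    (hr : Ccw ε s t r) : Ccw ε s t x := by
  obtain ⟨h₁, h₂, h₃⟩ := hx
  have hbary : signedArea ε p q r * signedArea ε s t x = signedArea ε q r x * signedArea ε s t p +
      signedArea ε r p x * signedArea ε s t q + signedArea ε p q x * signedArea ε s t r := by
    simp only [signedArea, cross2, Prod.fst_sub, Prod.snd_sub]; ring
  have hpos : 0 < signedArea ε p q r * signedArea ε s t x := by
    rw [hbary]
    exact add_pos (add_pos (mul_pos h₂ hp) (mul_pos h₃ hq)) (mul_pos h₁ hr)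
  exact pos_of_mul_pos_right hpos (h₁.of_inside h₂ h₃).le

theorem exists_last_two_around {S : Finset Pt} (hS : 1 < S.card) (h : ∀ x ∈ S, Ccw ε s t x) :
    ∃ y ∈ S, ∃ z ∈ S, y ≠ z ∧ ∀ x ∈ S, x ≠ y → x ≠ z → ¬ Ccw ε t y x ∧ ¬ Ccw ε t z x := by
  classical
  obtain ⟨y, hy, hylast⟩ := exists_last_around (Finset.card_pos.1 (by omega)) h
  obtain ⟨z, hz, hzlast⟩ := exists_last_around (S := S.erase y)
    (Finset.card_pos.1 (by rw [Finset.card_erase_of_mem hy]; omega))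
    fun x hx ↦ h x (Finset.mem_of_mem_erase hx)
  exact ⟨y, hy, z, Finset.mem_of_mem_erase hz, (Finset.ne_of_mem_erase hz).symm,
    fun x hx hxy _ ↦ ⟨hylast x hx, hzlast x (Finset.mem_erase.2 ⟨hxy, hx⟩)⟩⟩

theorem convex_setOf_signedArea_nonneg (ε : ℝ) (p q : Pt) :
    Convex ℝ {x | 0 ≤ signedArea ε p q x} := by
  intro x hx y hy a b ha hb hab
  obtain rfl : b = 1 - a := by linarith
  have : signedArea ε p q (a • x + (1 - a) • y) =
      a * signedArea ε p q x + (1 - a) * signedArea ε p q y := by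
    simp [signedArea, cross2]; ring
  rw [Set.mem_ofPred_eq] at *
  rw [this]
  positivity

theorem Ccw.notMem_convexHull {S : Set Pt} (hx : Ccw ε q p x)
    (hS : ∀ y ∈ S, 0 ≤ signedArea ε p q y) : x ∉ convexHull ℝ S := by
  intro hxS
  have : 0 ≤ signedArea ε p q x :=
    convexHull_min hS (convex_setOf_signedArea_nonneg ε p q) hxS
  rw [Ccw, ← signedArea_rotate, signedArea_swap] at hx
  linarith

theorem InTriangle.mem_convexHull (h : InTriangle ε p q r x) : x ∈ convexHull ℝ {p, q, r} := by
  obtain ⟨h₁, h₂, h₃⟩ := h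
  have hD := h₁.of_inside h₂ h₃
  have hsplit := signedArea_split (ε := ε) (p := p) (q := q) (r := r) (x := x)
  rw [Ccw] at *
  set D := signedArea ε p q r
  have hbary := (convex_convexHull ℝ {p, q, r}).sum_mem (t := Finset.univ)
    (w := ![signedArea ε q r x / D, signedArea ε r p x / D, signedArea ε p q x / D])
    (z := ![p, q, r])
    (by intro i _; fin_cases i; exacts [(div_pos h₂ hD).le, (div_pos h₃ hD).le, (div_pos h₁ hD).le])
    (by simp [Fin.sum_univ_three]; field_simp; linarith)
    (by intro i _; apply subset_convexHull; fin_cases i <;> simp)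
  convert hbary using 1
  simp only [Fin.sum_univ_three]
  ext <;> simp <;> field_simp <;> rw [← hsplit] <;> simp [signedArea, cross2] <;> ring

theorem collinear_of_signedArea_eq_zero (hε : ε ≠ 0) (hpq : p ≠ q)
    (h : signedArea ε p q r = 0) : Collinear ℝ {p, q, r} := by
  have hcross : (q.1 - p.1) * (r.2 - p.2) = (q.2 - p.2) * (r.1 - p.1) :=
    sub_eq_zero.1 ((mul_eq_zero.1 h).resolve_left hε)
  have hD : (q.1 - p.1) ^ 2 + (q.2 - p.2) ^ 2 ≠ 0 := by
    intro h0
    exact hpq (Prod.ext (by nlinarith) (by nlinarith))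
  have hr : AffineMap.lineMap p q
      (((q.1 - p.1) * (r.1 - p.1) + (q.2 - p.2) * (r.2 - p.2)) /
        ((q.1 - p.1) ^ 2 + (q.2 - p.2) ^ 2)) = r := by
    ext <;> simp [AffineMap.lineMap_apply] <;> field_simp
    · linear_combination (q.2 - p.2) * hcross
    · linear_combination -(q.1 - p.1) * hcross
  rw [Set.pair_comm, Set.insert_comm]
  exact collinear_insert_of_mem_affineSpan_pair
    (hr ▸ AffineMap.lineMap_mem_affineSpan_pair _ p q)

end Orientation

-- The guards make `grind` combine only orientations it already knows, forming no new triangles.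
local grind_pattern Ccw.of_inside => Ccw ε p q x, Ccw ε q r x, Ccw ε r p x where
  guard Ccw ε p q x
  guard Ccw ε q r x
  guard Ccw ε r p x

local grind_pattern Ccw.trans => Ccw ε t s p, Ccw ε t s q, Ccw ε t s r, Ccw ε t p q,
    Ccw ε t q r where
  guard Ccw ε t s p
  guard Ccw ε t s q
  guard Ccw ε t s r
  guard Ccw ε t p q
  guard Ccw ε t q r

local grind_pattern Ccw.trans' => Ccw ε s t p, Ccw ε s t q, Ccw ε s t r, Ccw ε t p q,
    Ccw ε t q r where
  guard Ccw ε s t p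
  guard Ccw ε s t q
  guard Ccw ε s t r
  guard Ccw ε t p q
  guard Ccw ε t q r

/-- Points `A` and `B` in general position that are strictly separated by a line and span no
divided 5-hole; `ε` is the orientation in which `Ccw` is read. -/
structure Divided (ε : ℝ) (A B : Finset Pt) : Prop where
  scale_ne_zero : ε ≠ 0
  genPos : GenPos (↑(A ∪ B) : Set Pt)
  separated : ∃ (v : Pt) (c : ℝ), (∀ p ∈ A, dotp v p < c) ∧ ∀ p ∈ B, c < dotp v p
  noHole : ¬ ∃ H : Finset Pt, DividedFiveHole A B H

/-- The pentagon `p q r s t` is convex, with vertices listed counterclockwise. -/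
structure ConvexPentagon (ε : ℝ) (p q r s t : Pt) : Prop where
  pqr : Ccw ε p q r
  pqs : Ccw ε p q s
  pqt : Ccw ε p q t
  prs : Ccw ε p r s
  prt : Ccw ε p r t
  pst : Ccw ε p s t
  qrs : Ccw ε q r s
  qrt : Ccw ε q r t
  qst : Ccw ε q s t
  rst : Ccw ε r s t

namespace ConvexPentagon

variable {ε : ℝ} {p q r s t x : Pt} (h : ConvexPentagon ε p q r s t)
include h

theorem rotate : ConvexPentagon ε q r s t p :=
  ⟨h.qrs, h.qrt, h.pqr.rotate, h.qst, h.pqs.rotate, h.pqt.rotate, h.rst, h.prs.rotate,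
    h.prt.rotate, h.pst.rotate⟩

theorem notMem_convexHull_others : p ∉ convexHull ℝ {q, r, s, t} := by
  refine h.pqt.rotate.notMem_convexHull ?_
  rintro y (rfl | rfl | rfl | rfl)
  · rw [signedArea_self_right]
  · exact h.qrt.rotate.rotate.le
  · exact h.qst.rotate.rotate.le
  · rw [signedArea_self_outer]

theorem not_ccw_of_mem_convexHull {S : Set Pt} (hS : S ⊆ {p, q, r, s, t})
    (hx : x ∈ convexHull ℝ S) : ¬ Ccw ε q p x := by
  refine fun hqpx ↦ hqpx.notMem_convexHull (fun y hy ↦ ?_) hx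
  rcases hS hy with (rfl | rfl | rfl | rfl | rfl)
  · rw [signedArea_self_outer]
  · rw [signedArea_self_right]
  · exact h.pqr.le
  · exact h.pqs.le
  · exact h.pqt.le

theorem convexPos : ConvexPos {p, q, r, s, t} := by
  rintro x (rfl | rfl | rfl | rfl | rfl) hx
  · exact h.notMem_convexHull_others (convexHull_mono (by grind) hx)
  · exact h.rotate.notMem_convexHull_others (convexHull_mono (by grind) hx)
  · exact h.rotate.rotate.notMem_convexHull_others (convexHull_mono (by grind) hx)
  · exact h.rotate.rotate.rotate.notMem_convexHull_others (convexHull_mono (by grind) hx)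
  · exact h.rotate.rotate.rotate.rotate.notMem_convexHull_others (convexHull_mono (by grind) hx)

theorem card_eq_five : ({p, q, r, s, t} : Finset Pt).card = 5 := by
  obtain ⟨hpq, hpr, hqr⟩ := h.pqr.ne
  obtain ⟨hps, hpt, hst⟩ := h.pst.ne
  obtain ⟨hqs, hqt, _⟩ := h.qst.ne
  obtain ⟨hrs, hrt, _⟩ := h.rst.ne
  simp [*]

end ConvexPentagon

namespace Divided

variable {ε : ℝ} {A B : Finset Pt} {p q r s t x y : Pt}

theorem neg (D : Divided ε A B) : Divided (-ε) A B :=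
  ⟨neg_ne_zero.2 D.scale_ne_zero, D.genPos, D.separated, D.noHole⟩

theorem ccw_or_ccw (D : Divided ε A B) (hp : p ∈ A ∪ B) (hq : q ∈ A ∪ B) (hr : r ∈ A ∪ B)
    (hpq : p ≠ q) (hpr : p ≠ r) (hqr : q ≠ r) : Ccw ε p q r ∨ Ccw ε p r q := by
  have : signedArea ε p q r ≠ 0 := fun h ↦
    D.genPos p hp q hq r hr hpq hpr hqr (collinear_of_signedArea_eq_zero D.scale_ne_zero hpq h)
  rw [Ccw, Ccw, signedArea_swap (p := p) (q := q), neg_pos]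
  exact this.lt_or_gt.symm

theorem exists_mem_pentagon (D : Divided ε A B) (h : ConvexPentagon ε p q r s t)
    (hP : {p, q, r, s, t} ⊆ A ∪ B) (hA : ∃ x ∈ A, x ∈ ({p, q, r, s, t} : Finset Pt))
    (hB : ∃ x ∈ B, x ∈ ({p, q, r, s, t} : Finset Pt)) :
    ∃ x ∈ A ∪ B, Ccw ε p q x ∧ Ccw ε q r x ∧ Ccw ε r s x ∧ Ccw ε s t x ∧ Ccw ε t p x := by
  have hnot : ¬ IsKHole 5 (A ∪ B) {p, q, r, s, t} := fun hole ↦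
    D.noHole ⟨_, hole, hA.imp fun x hx ↦ ⟨hx.2, hx.1⟩, hB.imp fun x hx ↦ ⟨hx.2, hx.1⟩⟩
  have hpos : ConvexPos (↑({p, q, r, s, t} : Finset Pt) : Set Pt) := by simpa using h.convexPos
  simp only [IsKHole, hP, h.card_eq_five, hpos, true_and, not_forall, not_not] at hnot
  obtain ⟨x, hx, hxH, hxhull⟩ := hnot
  refine ⟨x, hx, ?_⟩
  simp only [Finset.coe_insert, Finset.coe_singleton] at hxhull
  have key {u w : Pt} (hu : u ∈ ({p, q, r, s, t} : Finset Pt))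
      (hw : w ∈ ({p, q, r, s, t} : Finset Pt)) (huw : u ≠ w) (h : ¬ Ccw ε w u x) : Ccw ε u w x :=
    (D.ccw_or_ccw (hP hu) (hP hw) hx huw (by grind) (by grind)).resolve_right
      (mt (fun h ↦ h.rotate.rotate) h)
  refine ⟨key ?_ ?_ h.pqr.ne.1 (h.not_ccw_of_mem_convexHull ?_ hxhull),
    key ?_ ?_ h.qrs.ne.1 (h.rotate.not_ccw_of_mem_convexHull ?_ hxhull),
    key ?_ ?_ h.rst.ne.1 (h.rotate.rotate.not_ccw_of_mem_convexHull ?_ hxhull),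
    key ?_ ?_ h.pst.ne.2.2 (h.rotate.rotate.rotate.not_ccw_of_mem_convexHull ?_ hxhull),
    key ?_ ?_ h.pqt.ne.2.1.symm
      (h.rotate.rotate.rotate.rotate.not_ccw_of_mem_convexHull ?_ hxhull)⟩
  all_goals simp [Set.insert_subset_iff]

theorem ne_of_mem (D : Divided ε A B) (hp : p ∈ A) (hx : x ∈ B) : p ≠ x := by
  obtain ⟨v, c, hA, hB⟩ := D.separated
  rintro rfl
  exact lt_asymm (hA p hp) (hB p hx)

theorem not_inTriangle_of_mem (D : Divided ε A B) (hp : p ∈ A) (hq : q ∈ A) (hr : r ∈ A)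
    (hx : x ∈ B) : ¬ InTriangle ε p q r x := by
  rintro ⟨h₁, h₂, h₃⟩
  obtain ⟨v, c, hA, hB⟩ := D.separated
  have hbary : signedArea ε q r x * (c - dotp v p) + signedArea ε r p x * (c - dotp v q) +
      signedArea ε p q x * (c - dotp v r) + signedArea ε p q r * (dotp v x - c) = 0 := by
    simp only [signedArea, cross2, dotp, Prod.fst_sub, Prod.snd_sub]; ring
  linarith [mul_pos h₂ (sub_pos.2 (hA p hp)), mul_pos h₃ (sub_pos.2 (hA q hq)),
    mul_pos h₁ (sub_pos.2 (hA r hr)), mul_pos (h₁.of_inside h₂ h₃) (sub_pos.2 (hB x hx))]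

theorem not_crossing (D : Divided ε A B) (hp : p ∈ A) (hq : q ∈ A) (hx : x ∈ B) (hy : y ∈ B) :
    ¬ (Ccw ε p x q ∧ Ccw ε x q y ∧ Ccw ε q y p ∧ Ccw ε y p x) := by
  rintro ⟨h₁, h₂, h₃, h₄⟩
  obtain ⟨v, c, hA, hB⟩ := D.separated
  have hmeet : signedArea ε x q y * (c - dotp v p) + signedArea ε y p x * (c - dotp v q) +
      signedArea ε q y p * (dotp v x - c) + signedArea ε p x q * (dotp v y - c) = 0 := by
    simp only [signedArea, cross2, dotp, Prod.fst_sub, Prod.snd_sub]; ring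
  linarith [mul_pos h₂ (sub_pos.2 (hA p hp)), mul_pos h₄ (sub_pos.2 (hA q hq)),
    mul_pos h₃ (sub_pos.2 (hB x hx)), mul_pos h₁ (sub_pos.2 (hB y hy))]

end Divided

/-- The point `x` lies beyond the edge `q r` of the convex quadrilateral `p q r s`, in the region
cut off by that edge and its two neighbours; then `p q x r s` is a convex pentagon. -/
def InCap (ε : ℝ) (p q r s x : Pt) : Prop := Ccw ε p q x ∧ Ccw ε q x r ∧ Ccw ε x r s

/-- The point `x` lies in the open counterclockwise convex quadrilateral `p q r s`. -/
def InQuad (ε : ℝ) (p q r s x : Pt) : Prop := Ccw ε p q x ∧ Ccw ε q r x ∧ Ccw ε r s x ∧ Ccw ε s p x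

/-- The points `p`, `q`, `r`, `s` of `P` form, in this counterclockwise order, a 4-hole in `P`. -/
structure EmptyQuad (ε : ℝ) (P : Finset Pt) (p q r s : Pt) : Prop where
  subset : {p, q, r, s} ⊆ P
  pqr : Ccw ε p q r
  qrs : Ccw ε q r s
  rsp : Ccw ε r s p
  spq : Ccw ε s p q
  empty : ∀ x ∈ P, ¬ InQuad ε p q r s x

section Cap

variable {ε : ℝ} {A B P : Finset Pt} {p q r s x : Pt}

theorem EmptyQuad.rotate (Q : EmptyQuad ε P p q r s) : EmptyQuad ε P q r s p where
  subset := by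
    have := Q.subset
    grind
  pqr := Q.qrs
  qrs := Q.rsp
  rsp := Q.spq
  spq := Q.pqr
  empty := fun x hx ⟨h₁, h₂, h₃, h₄⟩ ↦ Q.empty x hx ⟨h₄, h₁, h₂, h₃⟩

theorem EmptyQuad.convexPentagon_of_inCap (Q : EmptyQuad ε P p q r s) (h : InCap ε p q r s x) :
    ConvexPentagon ε p q x r s := by
  obtain ⟨-, pqr, qrs, rsp, spq, -⟩ := Q
  obtain ⟨h₁, h₂, h₃⟩ := h
  constructor <;> grind

theorem Divided.exists_not_divided_cap (D : Divided ε A B) (Q : EmptyQuad ε (A ∪ B) p q r s)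
    (hx : x ∈ A ∪ B) (h : InCap ε p q r s x) :
    ∃ y ∈ A ∪ B, InCap ε p q r s y ∧ ({p, q, y, r, s} ⊆ A ∨ {p, q, y, r, s} ⊆ B) := by
  classical
  obtain ⟨y, hy, hmin⟩ := exists_empty_triangle ε r q
    (S := (A ∪ B).filter (InCap ε p q r s)) ⟨x, Finset.mem_filter.2 ⟨hx, h⟩⟩
  simp only [Finset.mem_filter] at hy hmin
  refine ⟨y, hy.1, hy.2, ?_⟩
  have hsub : {p, q, y, r, s} ⊆ A ∪ B := by
    have := Q.subset
    have := hy.1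
    grind
  have hpent := Q.convexPentagon_of_inCap hy.2
  by_contra! hmixed
  simp only [Finset.not_subset] at hmixed
  obtain ⟨⟨b, hb, hbA⟩, a, ha, haB⟩ := hmixed
  obtain ⟨z, hz, h₁, h₂, h₃, h₄, h₅⟩ := D.exists_mem_pentagon hpent hsub
    ⟨a, (Finset.mem_union.1 (hsub ha)).resolve_right haB, ha⟩
    ⟨b, (Finset.mem_union.1 (hsub hb)).resolve_left hbA, hb⟩
  rcases D.ccw_or_ccw (hsub (by simp : q ∈ _)) (hsub (by simp : r ∈ _)) hz Q.qrs.ne.1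
    h₁.ne.2.2 h₄.ne.2.1 with hqrz | hqzr
  · exact Q.empty z hz ⟨h₁, hqrz, h₄, h₅⟩
  · exact hmin z ⟨hz, h₁, hqzr, h₄.rotate.rotate⟩ ⟨hqzr.rotate.rotate, h₂, h₃⟩

theorem Divided.not_inCap (D : Divided ε A B) (Q : EmptyQuad ε (A ∪ B) p q r s)
    (hA : ∃ a ∈ A, a ∈ ({p, q, r, s} : Finset Pt)) (hB : ∃ b ∈ B, b ∈ ({p, q, r, s} : Finset Pt))
    (hx : x ∈ A ∪ B) : ¬ InCap ε p q r s x := by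
  intro h
  obtain ⟨a, ha, haQ⟩ := hA
  obtain ⟨b, hb, hbQ⟩ := hB
  obtain ⟨y, -, -, hAB⟩ := D.exists_not_divided_cap Q hx h
  rcases hAB with hA | hB
  · exact D.ne_of_mem (hA (by grind : b ∈ _)) hb rfl
  · exact D.ne_of_mem ha (hB (by grind : a ∈ _)) rfl

theorem Divided.not_inCap_of_subset (D : Divided ε A B) (Q : EmptyQuad ε (A ∪ B) p q r s)
    (hQ : p ∈ A) (hA : ∀ y ∈ A, ¬ InCap ε p q r s y) (hx : x ∈ B) : ¬ InCap ε p q r s x := by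
  intro h
  obtain ⟨y, -, hy, hAB⟩ := D.exists_not_divided_cap Q (Finset.mem_union_right A hx) h
  rcases hAB with hA' | hB
  · exact hA y (hA' (by simp)) hy
  · exact D.ne_of_mem hQ (hB (by simp)) rfl

end Cap

theorem Divided.ccw_or {ε : ℝ} {A B : Finset Pt} (D : Divided ε A B) (p q r : Pt)
    (hP : p ∈ A ∪ B ∧ q ∈ A ∪ B ∧ r ∈ A ∪ B := by grind)
    (hne : p ≠ q ∧ p ≠ r ∧ q ≠ r := by grind) : Ccw ε p q r ∨ Ccw ε p r q :=
  D.ccw_or_ccw hP.1 hP.2.1 hP.2.2 hne.1 hne.2.1 hne.2.2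

attribute [grind →] Divided.ne_of_mem

/-- The point `x` lies inside the angle at `o` from the ray `o p` counterclockwise to `o q`. -/
def InAngle (ε : ℝ) (o p q x : Pt) : Prop := Ccw ε o p x ∧ Ccw ε o x q

/-- Among the vertices of a convex polygon with vertices `o`, `p`, `q`, the vertex `z` lies
between `q` and `o`. -/
def After (ε : ℝ) (o p q z : Pt) : Prop := Ccw ε o p z ∧ Ccw ε o q z ∧ Ccw ε p q z

/-- Among the vertices of a convex polygon with vertices `o`, `p`, `q`, the vertex `z` lies
between `o` and `p`. -/
def Before (ε : ℝ) (o p q z : Pt) : Prop := Ccw ε o z p ∧ Ccw ε o z q ∧ Ccw ε p q z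

/-- In the convex polygon with vertex set `A`, the vertex `q` follows `p` counterclockwise, and
`o` is a further vertex. -/
structure IsEdgeFrom (ε : ℝ) (A : Finset Pt) (o p q : Pt) : Prop where
  apex_mem : o ∈ A
  fst_mem : p ∈ A
  snd_mem : q ∈ A
  opq : Ccw ε o p q
  after_or_before : ∀ z ∈ A, z ∉ ({o, p, q} : Finset Pt) → After ε o p q z ∨ Before ε o p q z

attribute [grind →] IsEdgeFrom.apex_mem IsEdgeFrom.fst_mem IsEdgeFrom.snd_mem IsEdgeFrom.opq

section EdgeAngle

variable {ε : ℝ} {A B : Finset Pt} {o p q b c d x y z : Pt}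

theorem IsEdgeFrom.ccw_edge (W : IsEdgeFrom ε A o p q) (D : Divided ε A B) (hy : y ∈ B)
    (h : InAngle ε o p q y) : Ccw ε p y q := by
  refine (D.ccw_or p q y).resolve_left fun pqy ↦ ?_
  exact D.not_inTriangle_of_mem W.apex_mem W.fst_mem W.snd_mem hy ⟨h.1, pqy, h.2.rotate.rotate⟩

theorem IsEdgeFrom.not_inAngle (W : IsEdgeFrom ε A o p q) (hz : z ∈ A) : ¬ InAngle ε o p q z := by
  have := W.after_or_before z hz
  grind [InAngle, After, Before]

/-- Among the points of `B` in the angle `p o q`, the point `b` is nearest to the line `p q`, in the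
sense that the triangle `q p b` contains no other. -/
structure IsNearest (ε : ℝ) (B : Finset Pt) (o p q b : Pt) : Prop where
  mem : b ∈ B
  inAngle : InAngle ε o p q b
  not_inTriangle : ∀ y ∈ B, InAngle ε o p q y → ¬ InTriangle ε q p b y

attribute [grind →] IsNearest.mem

theorem exists_isNearest {S : Finset Pt} (hS : ∀ y, y ∈ S ↔ y ∈ B ∧ InAngle ε o p q y)
    (hne : S.Nonempty) : ∃ b, IsNearest ε B o p q b := by
  obtain ⟨b, hb, hmin⟩ := exists_empty_triangle ε q p hne
  obtain ⟨hbB, hbW⟩ := (hS b).1 hb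
  exact ⟨b, hbB, hbW, fun y hy hyW ↦ hmin y ((hS y).2 ⟨hy, hyW⟩)⟩

theorem IsNearest.emptyQuad (N : IsNearest ε B o p q b) (W : IsEdgeFrom ε A o p q)
    (D : Divided ε A B) : EmptyQuad ε (A ∪ B) o p b q := by
  obtain ⟨opb, obq⟩ := N.inAngle
  refine ⟨by grind, opb, W.ccw_edge D N.mem N.inAngle, obq.rotate, W.opq.rotate.rotate,
    fun y hy ⟨opy, pby, bqy, qoy⟩ ↦ ?_⟩
  have hyW : InAngle ε o p q y := ⟨opy, qoy.rotate⟩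
  rcases Finset.mem_union.1 hy with hyA | hyB
  · exact W.not_inAngle hyA hyW
  · exact N.not_inTriangle y hyB hyW ⟨(W.ccw_edge D hyB hyW).rotate.rotate, pby, bqy⟩

theorem IsNearest.ccw (N : IsNearest ε B o p q b) (W : IsEdgeFrom ε A o p q)
    (D : Divided ε A B) (hy : y ∈ B) (h : InAngle ε o p q y) (hyb : y ≠ b) :
    Ccw ε p y b ∧ Ccw ε q b y := by
  have Q := N.emptyQuad W D
  have : ¬ InCap ε o p b q y := D.not_inCap Q ⟨o, W.apex_mem, by simp⟩ ⟨b, N.mem, by simp⟩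
    (Finset.mem_union_right A hy)
  have : ¬ InCap ε p b q o y := D.not_inCap Q.rotate ⟨o, W.apex_mem, by simp⟩ ⟨b, N.mem, by simp⟩
    (Finset.mem_union_right A hy)
  have : ¬ InTriangle ε q p b y := N.not_inTriangle y hy h
  have : Ccw ε p y q := W.ccw_edge D hy h
  have := D.ccw_or p y b
  have := D.ccw_or q y b
  grind [InCap, InTriangle, InAngle]

theorem IsNearest.ccw_after (N : IsNearest ε B o p q b) (W : IsEdgeFrom ε A o p q)
    (D : Divided ε A B) (hz : z ∈ A) (h : After ε o p q z) (hy : y ∈ B) (hyW : InAngle ε o p q y) :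
    Ccw ε q y z := by
  obtain ⟨opz, oqz, pqz⟩ := h
  have qbz : Ccw ε q b z := (D.ccw_or q b z).resolve_right fun qzb ↦
    D.not_inCap (N.emptyQuad W D).rotate.rotate ⟨o, W.apex_mem, by simp⟩ ⟨b, N.mem, by simp⟩
      (Finset.mem_union_left B hz) ⟨qzb.rotate.rotate, oqz.rotate, opz.rotate.rotate⟩
  rcases eq_or_ne y b with rfl | hyb
  · exact qbz
  have := N.ccw W D hy hyW hyb
  have := W.ccw_edge D hy hyW
  have := W.ccw_edge D N.mem N.inAngle
  have := D.ccw_or q y z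
  grind

/-- Among the points of `B` in the angle `p o q` other than `b`, the points `c` and `d` are the last
two around `p`, labelled so that the triangle `b c d` is counterclockwise. -/
structure IsLastPair (ε : ℝ) (B : Finset Pt) (o p q b c d : Pt) : Prop where
  mem_left : c ∈ B
  mem_right : d ∈ B
  inAngle_left : InAngle ε o p q c
  inAngle_right : InAngle ε o p q d
  bcd : Ccw ε b c d
  ccw : ∀ y ∈ B, InAngle ε o p q y → y ≠ b → y ≠ c → y ≠ d → Ccw ε p y c ∧ Ccw ε p y d

attribute [grind →] IsLastPair.mem_left IsLastPair.mem_right IsLastPair.bcd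

theorem IsNearest.exists_isLastPair (N : IsNearest ε B o p q b) (W : IsEdgeFrom ε A o p q)
    (D : Divided ε A B) {S : Finset Pt} (hS : ∀ y, y ∈ S ↔ y ∈ B ∧ InAngle ε o p q y)
    (hcard : 2 < S.card) : ∃ c d, IsLastPair ε B o p q b c d := by
  classical
  have hbS : b ∈ S := (hS b).2 ⟨N.mem, N.inAngle⟩
  obtain ⟨c, hc, d, hd, hcd, hlast⟩ := exists_last_two_around (S := S.erase b) (s := b) (t := p)
    (by rw [Finset.card_erase_of_mem hbS]; omega) (fun y hy ↦ by
      obtain ⟨hyb, hyS⟩ := Finset.mem_erase.1 hy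
      exact (N.ccw W D ((hS y).1 hyS).1 ((hS y).1 hyS).2 hyb).1.rotate.rotate)
  obtain ⟨hcb, hcB, hcW⟩ := by simpa [hS] using hc
  obtain ⟨hdb, hdB, hdW⟩ := by simpa [hS] using hd
  have hlast' (y : Pt) (hy : y ∈ B) (hyW : InAngle ε o p q y) (hyb : y ≠ b) (hyc : y ≠ c)
      (hyd : y ≠ d) : Ccw ε p y c ∧ Ccw ε p y d := by
    obtain ⟨hpcy, hpdy⟩ := hlast y (by simp [*]) hyc hyd
    exact ⟨(D.ccw_or p y c).resolve_right hpcy, (D.ccw_or p y d).resolve_right hpdy⟩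
  rcases D.ccw_or b c d with bcd | bdc
  · exact ⟨c, d, hcB, hdB, hcW, hdW, bcd, hlast'⟩
  · exact ⟨d, c, hdB, hcB, hdW, hcW, bdc, fun y hy hyW hyb hyd hyc ↦
      (hlast' y hy hyW hyb hyc hyd).symm⟩

theorem IsLastPair.not_inQuad (L : IsLastPair ε B o p q b c d) (N : IsNearest ε B o p q b)
    (W : IsEdgeFrom ε A o p q) (D : Divided ε A B) (hy : y ∈ B) :
    ¬ InQuad ε b c d q y := by
  rintro ⟨bcy, cdy, dqy, qby⟩
  have opq := W.opq
  obtain ⟨opb, obq⟩ := N.inAngle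
  obtain ⟨opc, ocq⟩ := L.inAngle_left
  obtain ⟨opd, odq⟩ := L.inAngle_right
  have := N.ccw W D L.mem_right L.inAngle_right L.bcd.ne.2.1.symm
  have inAngle_or : (InTriangle ε b c d y ∨ InTriangle ε b d q y) ∧ InAngle ε o p q y := by
    rcases D.ccw_or b d y with bdy | byd
    · have hT : InTriangle ε b d q y := ⟨bdy, dqy, qby⟩
      exact ⟨.inr hT, .of_inTriangle hT opb opd opq, by grind⟩
    · have hT : InTriangle ε b c d y := ⟨bcy, cdy, byd.rotate.rotate⟩
      exact ⟨.inl hT, .of_inTriangle hT opb opc opd,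
        (Ccw.of_inTriangle hT obq.rotate.rotate ocq.rotate.rotate odq.rotate.rotate).rotate⟩
  obtain ⟨hT, hyW⟩ := inAngle_or
  have hyb := N.ccw W D hy hyW bcy.ne.2.1.symm
  obtain ⟨pyc, pyd⟩ := L.ccw y hy hyW bcy.ne.2.1.symm bcy.ne.2.2.symm cdy.ne.2.2.symm
  have pyq := W.ccw_edge D hy hyW
  exact not_ccw_self <| hT.elim (fun h ↦ .of_inTriangle h hyb.1 pyc pyd)
    fun h ↦ .of_inTriangle h hyb.1 pyd pyq

theorem IsLastPair.emptyQuad (L : IsLastPair ε B o p q b c d) (N : IsNearest ε B o p q b)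
    (W : IsEdgeFrom ε A o p q) (D : Divided ε A B) (qcd : Ccw ε q c d) :
    EmptyQuad ε (A ∪ B) b c d q := by
  obtain ⟨-, qbc⟩ := N.ccw W D L.mem_left L.inAngle_left L.bcd.ne.1.symm
  obtain ⟨-, qbd⟩ := N.ccw W D L.mem_right L.inAngle_right L.bcd.ne.2.1.symm
  refine ⟨by grind, L.bcd, qcd.rotate, qbd.rotate.rotate, qbc,
    fun y hy ⟨bcy, cdy, dqy, qby⟩ ↦ ?_⟩
  rcases Finset.mem_union.1 hy with hyA | hyB
  · have := W.ccw_edge D N.mem N.inAngle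
    have := W.ccw_edge D L.mem_right L.inAngle_right
    have := W.after_or_before y hyA
    grind [After, Before]
  · exact L.not_inQuad N W D hyB ⟨bcy, cdy, dqy, qby⟩

theorem IsLastPair.ccw_after (L : IsLastPair ε B o p q b c d) (N : IsNearest ε B o p q b)
    (W : IsEdgeFrom ε A o p q) (D : Divided ε A B) (hz : z ∈ A) (h : After ε o p q z) :
    Ccw ε z d c ∧ Ccw ε z b c := by
  have pbq := W.ccw_edge D N.mem N.inAngle
  have qbz := N.ccw_after W D hz h N.mem N.inAngle
  have qdz := N.ccw_after W D hz h L.mem_right L.inAngle_right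
  have := N.ccw W D L.mem_left L.inAngle_left L.bcd.ne.1.symm
  have := N.ccw W D L.mem_right L.inAngle_right L.bcd.ne.2.1.symm
  obtain ⟨-, -, pqz⟩ := h
  have zbc : Ccw ε z b c := by
    have := D.ccw_or z b c
    grind
  refine ⟨(D.ccw_or z d c).resolve_right fun zcd ↦ ?_, zbc⟩
  rcases D.ccw_or q c d with qcd | qdc
  · exact D.not_inCap (L.emptyQuad N W D qcd).rotate ⟨q, W.snd_mem, by simp⟩
      ⟨b, N.mem, by simp⟩ (Finset.mem_union_left B hz) ⟨zcd.rotate, qdz.rotate, qbz.rotate.rotate⟩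
  · grind

theorem IsLastPair.ccw_fst (L : IsLastPair ε B o p q b c d) (N : IsNearest ε B o p q b)
    (W : IsEdgeFrom ε A o p q) (D : Divided ε A B) (hz : z ∈ A) (h : After ε o p q z) :
    Ccw ε p c d := by
  have := W.ccw_edge D N.mem N.inAngle
  have := N.ccw_after W D hz h N.mem N.inAngle
  have := N.ccw W D L.mem_left L.inAngle_left L.bcd.ne.1.symm
  have := L.ccw_after N W D hz h
  refine (D.ccw_or p c d).resolve_right fun pdc ↦ ?_
  have zpc_b : InTriangle ε z p c b := by grind [InTriangle, After]
  have := zpc_b.1.of_inside zpc_b.2.1 zpc_b.2.2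
  grind [InTriangle]

theorem IsLastPair.emptyQuad_fst (L : IsLastPair ε B o p q b c d) (N : IsNearest ε B o p q b)
    (W : IsEdgeFrom ε A o p q) (D : Divided ε A B) (hz : z ∈ A) (h : After ε o p q z) :
    EmptyQuad ε (A ∪ B) p c d b := by
  have pcb := (N.ccw W D L.mem_left L.inAngle_left L.bcd.ne.1.symm).1
  have pdb := (N.ccw W D L.mem_right L.inAngle_right L.bcd.ne.2.1.symm).1
  refine ⟨by grind, L.ccw_fst N W D hz h, L.bcd.rotate, pdb.rotate,
    pcb.rotate.rotate, fun y hy ⟨pcy, cdy, dby, bpy⟩ ↦ ?_⟩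
  obtain ⟨opb, obq⟩ := N.inAngle
  obtain ⟨opc, ocq⟩ := L.inAngle_left
  obtain ⟨opd, odq⟩ := L.inAngle_right
  have hyW : InAngle ε o p q y := by
    rcases D.ccw_or b c y with bcy | cby
    · have hT : InTriangle ε b c d y := ⟨bcy, cdy, dby⟩
      exact ⟨.of_inTriangle hT opb opc opd,
        (Ccw.of_inTriangle hT obq.rotate.rotate ocq.rotate.rotate odq.rotate.rotate).rotate⟩
    · have hT : InTriangle ε p c b y := ⟨pcy, cby.rotate.rotate, bpy⟩
      have qop := W.opq.rotate.rotate
      exact ⟨by grind, (Ccw.of_inTriangle hT qop ocq.rotate.rotate obq.rotate.rotate).rotate⟩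
  rcases Finset.mem_union.1 hy with hyA | hyB
  · exact W.not_inAngle hyA hyW
  · exact (L.ccw y hyB hyW bpy.ne.2.1.symm pcy.ne.2.2.symm cdy.ne.2.2.symm).1.not_swap pcy

theorem IsLastPair.ccw_before (L : IsLastPair ε B o p q b c d) (N : IsNearest ε B o p q b)
    (W : IsEdgeFrom ε A o p q) (D : Divided ε A B) (hz : z ∈ A) (h : After ε o p q z)
    (hx : x ∈ A) (h' : Before ε o p q x) : Ccw ε x d c ∧ Ccw ε x c b := by
  have hcap_op : ¬ InCap ε q o p b x := D.not_inCap (N.emptyQuad W D).rotate.rotate.rotate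
    ⟨p, W.fst_mem, by simp⟩ ⟨b, N.mem, by simp⟩ (Finset.mem_union_left B hx)
  have hcap_pc : ¬ InCap ε b p c d x :=
    D.not_inCap (L.emptyQuad_fst N W D hz h).rotate.rotate.rotate
      ⟨p, W.fst_mem, by simp⟩ ⟨b, N.mem, by simp⟩ (Finset.mem_union_left B hx)
  have := N.ccw W D L.mem_left L.inAngle_left L.bcd.ne.1.symm
  have := W.ccw_edge D N.mem N.inAngle
  have := W.ccw_edge D L.mem_left L.inAngle_left
  have := L.ccw_fst N W D hz h
  obtain ⟨oxp, oxq, pqx⟩ := h'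
  have pxb : Ccw ε p x b := by
    have := D.ccw_or p x b
    grind [InCap]
  have pxc : Ccw ε p x c := by
    have := D.ccw_or p x c
    grind
  have xdc : Ccw ε x d c := by
    have := D.ccw_or x c d
    grind [InCap]
  have xcb : Ccw ε x c b := by
    have := D.ccw_or x c b
    grind
  exact ⟨xdc, xcb⟩

theorem IsLastPair.not_before (L : IsLastPair ε B o p q b c d) (N : IsNearest ε B o p q b)
    (W : IsEdgeFrom ε A o p q) (D : Divided ε A B) (hz : z ∈ A) (h : After ε o p q z)
    (hx : x ∈ A) : ¬ Before ε o p q x := by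
  intro h'
  obtain ⟨xdc, xcb⟩ := L.ccw_before N W D hz h hx h'
  obtain ⟨zdc, zbc⟩ := L.ccw_after N W D hz h
  have zxb : Ccw ε z x b := by
    have := D.not_inTriangle_of_mem W.apex_mem hx hz N.mem
    have := D.ccw_or z x b
    grind [InTriangle, InAngle, After, Before, N.inAngle]
  have zxc_b : InTriangle ε z x c b := ⟨zxb, xcb, zbc.rotate.rotate⟩
  have := zxc_b.1.of_inside zxc_b.2.1 zxc_b.2.2
  grind [InTriangle]

theorem IsEdgeFrom.card_le_two (W : IsEdgeFrom ε A o p q) (D : Divided ε A B) {S : Finset Pt}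
    (hS : ∀ y, y ∈ S ↔ y ∈ B ∧ InAngle ε o p q y) (hz : z ∈ A) (hafter : After ε o p q z)
    (hx : x ∈ A) (hbefore : Before ε o p q x) : S.card ≤ 2 := by
  by_contra! hcard
  obtain ⟨b, N⟩ := exists_isNearest hS (Finset.card_pos.1 (by omega))
  obtain ⟨c, d, L⟩ := N.exists_isLastPair W D hS hcard
  exact L.not_before N W D hz hafter hx hbefore

end EdgeAngle

theorem Divided.ccw_across {ε : ℝ} {A B : Finset Pt} {o q x y : Pt} (D : Divided ε A B)
    (ho : o ∈ A) (hq : q ∈ A) (hx : x ∈ B) (hy : y ∈ B) (oxq : Ccw ε o x q) (oqy : Ccw ε o q y)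
    (oxy : Ccw ε o x y) : Ccw ε q x y := by
  refine (D.ccw_or q x y).resolve_right fun qyx ↦ ?_
  exact D.not_crossing ho hq hx hy ⟨oxq, qyx.rotate.rotate, oqy.rotate, oxy.rotate.rotate⟩

/-- The points `A` and `B` are as in `Divided`, and `A` consists of the vertices of the
counterclockwise convex pentagon `o p q r s`. -/
structure DividedPentagon (ε : ℝ) (A B : Finset Pt) (o p q r s : Pt) : Prop where
  divided : Divided ε A B
  pentagon : ConvexPentagon ε o p q r s
  vertices : A = {o, p, q, r, s}

namespace DividedPentagon

variable {ε : ℝ} {A B : Finset Pt} {o p q r s u x y : Pt} (V : DividedPentagon ε A B o p q r s)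
include V

@[grind →] theorem o_mem : o ∈ A := by simp [V.vertices]
@[grind →] theorem p_mem : p ∈ A := by simp [V.vertices]
@[grind →] theorem q_mem : q ∈ A := by simp [V.vertices]
@[grind →] theorem r_mem : r ∈ A := by simp [V.vertices]
@[grind →] theorem s_mem : s ∈ A := by simp [V.vertices]

theorem eq_of_mem (hx : x ∈ A) : x = o ∨ x = p ∨ x = q ∨ x = r ∨ x = s := by
  simpa [V.vertices] using hx

theorem isEdgeFrom_pq : IsEdgeFrom ε A o p q := by
  refine ⟨V.o_mem, V.p_mem, V.q_mem, V.pentagon.pqr, fun z hz hz' ↦ ?_⟩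
  have := V.pentagon
  have := V.eq_of_mem hz
  grind [After, Before, cases ConvexPentagon]

theorem isEdgeFrom_qr : IsEdgeFrom ε A o q r := by
  refine ⟨V.o_mem, V.q_mem, V.r_mem, V.pentagon.prs, fun z hz hz' ↦ ?_⟩
  have := V.pentagon
  have := V.eq_of_mem hz
  grind [After, Before, cases ConvexPentagon]

theorem isEdgeFrom_rs : IsEdgeFrom ε A o r s := by
  refine ⟨V.o_mem, V.r_mem, V.s_mem, V.pentagon.pst, fun z hz hz' ↦ ?_⟩
  have := V.pentagon
  have := V.eq_of_mem hz
  grind [After, Before, cases ConvexPentagon]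

theorem emptyQuad_oqrs : EmptyQuad ε (A ∪ B) o q r s := by
  have D := V.divided
  have P := V.pentagon
  refine ⟨by grind, P.prs, P.rst, P.pst.rotate, P.prt.rotate.rotate,
    fun y hy ⟨oqy, qry, rsy, soy⟩ ↦ ?_⟩
  rcases Finset.mem_union.1 hy with hyA | hyB
  · have := V.eq_of_mem hyA
    grind [cases ConvexPentagon]
  · have := D.not_inTriangle_of_mem V.o_mem V.q_mem V.r_mem hyB
    have := D.not_inTriangle_of_mem V.o_mem V.r_mem V.s_mem hyB
    have := D.ccw_or o r y (hne := by grind [P.pst])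
    grind [InTriangle]

theorem ccw_of_inAngle_qr (hx : x ∈ B) (h : InAngle ε o q r x) : Ccw ε q x r ∧ Ccw ε r x s := by
  have D := V.divided
  have P := V.pentagon
  have qxr := V.isEdgeFrom_qr.ccw_edge D hx h
  refine ⟨qxr, (D.ccw_or r x s (hne := by grind [P.pst])).resolve_right fun rsx ↦ ?_⟩
  refine D.not_inCap_of_subset V.emptyQuad_oqrs V.o_mem (fun y hy hcap ↦ ?_) hx
    ⟨h.1, qxr, rsx.rotate.rotate⟩
  have := V.eq_of_mem hy
  grind [InCap, cases ConvexPentagon]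

theorem ccw_of_inAngle_rs (hx : x ∈ B) (h : InAngle ε o r s x) : Ccw ε q x r ∧ Ccw ε r x s := by
  have D := V.divided
  have P := V.pentagon
  have rxs := V.isEdgeFrom_rs.ccw_edge D hx h
  refine ⟨(D.ccw_or q x r (hne := by grind [P.prs])).resolve_right fun qrx ↦ ?_, rxs⟩
  refine D.not_inCap_of_subset V.emptyQuad_oqrs.rotate V.q_mem (fun y hy hcap ↦ ?_) hx
    ⟨qrx, rxs, h.2.rotate⟩
  have := V.eq_of_mem hy
  grind [InCap, cases ConvexPentagon]

theorem ccw_or_of_before (hu : u ∈ B) (opu : Ccw ε o p u) (ous : Ccw ε o u s)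
    (hy : y ∈ B) (oyp : Ccw ε o y p) :
    (Ccw ε o u y ∧ Ccw ε o s y ∧ Ccw ε s u y) ∨ (Ccw ε o y u ∧ Ccw ε p y u) := by
  have D := V.divided
  have ops := V.pentagon.pqt
  rcases D.ccw_or o u y (hne := by grind) with ouy | oyu
  · have osy : Ccw ε o s y := (D.ccw_or o s y (hne := by grind)).resolve_right fun oys ↦
      opu.not_swap (ous.rotate.rotate.trans' oys.rotate.rotate ops.rotate.rotate ouy oyp)
    exact .inl ⟨ouy, osy, D.ccw_across V.o_mem V.s_mem hu hy ous osy ouy⟩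
  · have : Ccw (-ε) p u y :=
      D.neg.ccw_across V.o_mem V.p_mem hu hy (ccw_neg.2 opu) (ccw_neg.2 oyp) (ccw_neg.2 oyu)
    exact .inr ⟨oyu, ccw_neg.1 this⟩

end DividedPentagon

/-- In the convex pentagon `o p q r s` with vertex set `A`, the angle `p o q` contains at least
three points of `B`: the point `b` nearest to the edge `p q`, and the last two points `c` and `d`
around `p` among the others. -/
structure OuterWedge (ε : ℝ) (A B : Finset Pt) (o p q r s b c d : Pt) : Prop
    extends DividedPentagon ε A B o p q r s where
  nearest : IsNearest ε B o p q b
  lastPair : IsLastPair ε B o p q b c d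

/-- The orientations of triangles that hold in every `OuterWedge`. -/
structure OuterWedgeCcw (ε : ℝ) (o p q r s b c d : Pt) : Prop where
  opq : Ccw ε o p q
  opr : Ccw ε o p r
  ops : Ccw ε o p s
  oqr : Ccw ε o q r
  oqs : Ccw ε o q s
  ors : Ccw ε o r s
  pqr : Ccw ε p q r
  pqs : Ccw ε p q s
  prs : Ccw ε p r s
  qrs : Ccw ε q r s
  opb : Ccw ε o p b
  obq : Ccw ε o b q
  opc : Ccw ε o p c
  ocq : Ccw ε o c q
  opd : Ccw ε o p d
  odq : Ccw ε o d q
  pbq : Ccw ε p b q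
  pcq : Ccw ε p c q
  pdq : Ccw ε p d q
  bcd : Ccw ε b c d
  pcd : Ccw ε p c d
  pcb : Ccw ε p c b
  pdb : Ccw ε p d b
  qbc : Ccw ε q b c
  qbd : Ccw ε q b d
  qbr : Ccw ε q b r
  qdr : Ccw ε q d r
  qbs : Ccw ε q b s
  qds : Ccw ε q d s
  rdc : Ccw ε r d c
  sbc : Ccw ε s b c
  sdc : Ccw ε s d c

attribute [grind →] OuterWedge.toDividedPentagon

namespace OuterWedgeCcw

variable {ε : ℝ} {o p q r s b c d : Pt} (T : OuterWedgeCcw ε o p q r s b c d)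
include T

theorem ocr : Ccw ε o c r := T.opc.trans T.opq T.opr T.ocq T.oqr
theorem ods : Ccw ε o d s := T.opd.trans T.opq T.ops T.odq T.oqs
theorem obs : Ccw ε o b s := T.opb.trans T.opq T.ops T.obq T.oqs
theorem ocs : Ccw ε o c s := T.opc.trans T.opq T.ops T.ocq T.oqs
theorem odr : Ccw ε o d r := T.opd.trans T.opq T.opr T.odq T.oqr
theorem pcr : Ccw ε p c r := by grind [T.opc, T.opq, T.opr, T.pcq, T.pqr]
theorem pdr : Ccw ε p d r := by grind [T.opd, T.opq, T.opr, T.pdq, T.pqr]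
theorem pcs : Ccw ε p c s := by grind [T.opc, T.opq, T.ops, T.pcq, T.pqs]
theorem pds : Ccw ε p d s := by grind [T.opd, T.opq, T.ops, T.pdq, T.pqs]
theorem bds : Ccw ε b d s := by grind [T.pds, T.pdq, T.pdb, T.qds, T.qbd]

end OuterWedgeCcw

namespace OuterWedge

variable {ε : ℝ} {A B : Finset Pt} {o p q r s b c d x y : Pt} (U : OuterWedge ε A B o p q r s b c d)
include U

theorem ccw : OuterWedgeCcw ε o p q r s b c d := by
  obtain ⟨V, N, L⟩ := id U
  have D := V.divided
  have W := V.isEdgeFrom_pq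
  obtain ⟨opq, opr, ops, oqr, oqs, ors, pqr, pqs, prs, qrs⟩ := V.pentagon
  have r_after : After ε o p q r := ⟨opr, oqr, pqr⟩
  have s_after : After ε o p q s := ⟨ops, oqs, pqs⟩
  obtain ⟨hb, hc, hd⟩ := And.intro N.mem <| And.intro L.mem_left L.mem_right
  obtain ⟨⟨opb, obq⟩, ⟨opc, ocq⟩, opd, odq⟩ :=
    And.intro N.inAngle <| And.intro L.inAngle_left L.inAngle_right
  obtain ⟨pcb, qbc⟩ := N.ccw W D hc L.inAngle_left L.bcd.ne.1.symm
  obtain ⟨pdb, qbd⟩ := N.ccw W D hd L.inAngle_right L.bcd.ne.2.1.symm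
  exact {
    opq, opr, ops, oqr, oqs, ors, pqr, pqs, prs, qrs
    opb, obq, opc, ocq, opd, odq
    pbq := W.ccw_edge D hb N.inAngle
    pcq := W.ccw_edge D hc L.inAngle_left
    pdq := W.ccw_edge D hd L.inAngle_right
    bcd := L.bcd
    pcd := L.ccw_fst N W D V.r_mem r_after
    pcb, pdb, qbc, qbd
    qbr := N.ccw_after W D V.r_mem r_after hb N.inAngle
    qdr := N.ccw_after W D V.r_mem r_after hd L.inAngle_right
    qbs := N.ccw_after W D V.s_mem s_after hb N.inAngle
    qds := N.ccw_after W D V.s_mem s_after hd L.inAngle_right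
    rdc := (L.ccw_after N W D V.r_mem r_after).1
    sbc := (L.ccw_after N W D V.s_mem s_after).2
    sdc := (L.ccw_after N W D V.s_mem s_after).1 }

@[grind →] theorem b_mem : b ∈ B := U.nearest.mem
@[grind →] theorem c_mem : c ∈ B := U.lastPair.mem_left
@[grind →] theorem d_mem : d ∈ B := U.lastPair.mem_right

theorem ccw_rbd : Ccw ε r b d := by
  have T := U.ccw
  refine (U.divided.ccw_or r b d (hne := by grind [T.qbr, T.qbd, T.qdr])).resolve_right
    fun rdb ↦ T.qdr.rotate.not_swap ?_
  exact T.pdq.trans' T.pdb T.pdr T.qbd.rotate.rotate rdb.rotate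

theorem ccw_beyond (hx : x ∈ B) (h : InAngle ε o q s x) :
    (Ccw ε q x r ∧ Ccw ε r x s) ∧ Ccw ε q b x ∧ Ccw ε q c x ∧ Ccw ε q d x := by
  obtain ⟨oqx, oxs⟩ := h
  have T := U.ccw
  have V := U.toDividedPentagon
  have D := U.divided
  constructor
  · rcases D.ccw_or o x r (hne := by grind [T.oqr]) with oxr | orx
    · exact V.ccw_of_inAngle_qr hx ⟨oqx, oxr⟩
    · exact V.ccw_of_inAngle_rs hx ⟨orx, oxs⟩
  · have opx : Ccw ε o p x := by grind [T.opq, T.ops, T.oqs]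
    exact ⟨D.ccw_across U.o_mem U.q_mem U.b_mem hx T.obq oqx (T.opb.trans T.opq opx T.obq oqx),
      D.ccw_across U.o_mem U.q_mem U.c_mem hx T.ocq oqx (T.opc.trans T.opq opx T.ocq oqx),
      D.ccw_across U.o_mem U.q_mem U.d_mem hx T.odq oqx (T.opd.trans T.opq opx T.odq oqx)⟩

theorem not_inAngle_of_ccw (hx : x ∈ B) (hb : x ≠ b) (hc : x ≠ c) (hd : x ≠ d)
    (h : ¬ Ccw ε p x c ∨ ¬ Ccw ε p x d) : ¬ InAngle ε o p q x := fun hW ↦ by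
  have := U.lastPair.ccw x hx hW hb hc hd
  tauto

theorem inAngle_of_inQuad_bdrq (hx : x ∈ B) (h : InQuad ε b d r q x) : InAngle ε o q r x := by
  obtain ⟨bdx, drx, rqx, -⟩ := h
  have T := U.ccw
  have rbd := U.ccw_rbd
  have rox : Ccw ε r o x := T.odr.rotate.trans' T.qdr.rotate drx T.oqr.rotate.rotate rqx
  have dxp : Ccw ε d x p := drx.trans rbd.rotate.rotate T.pdr.rotate bdx.rotate T.pdb.rotate
  have rpx : Ccw ε r p x := T.pdr.rotate.trans' T.qdr.rotate drx T.pqr.rotate.rotate rqx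
  have pxo : Ccw ε p x o :=
    dxp.rotate.rotate.trans T.pdr T.opd.rotate rpx.rotate T.opr.rotate
  refine ⟨(U.divided.ccw_or o q x (hne := by grind [T.oqr])).resolve_right fun oxq ↦ ?_,
    rox.rotate⟩
  have hb : x ≠ b := bdx.ne.2.1.symm
  have hd : x ≠ d := bdx.ne.2.2.symm
  have hc : x ≠ c := fun h ↦ T.bcd.not_swap (h ▸ bdx)
  exact U.not_inAngle_of_ccw hx hb hc hd (.inr dxp.rotate.rotate.not_swap) ⟨pxo.rotate.rotate, oxq⟩

theorem ccw_cxd (hx : x ∈ B) (h : InAngle ε o q s x) (rxd : Ccw ε r x d) : Ccw ε c x d := by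
  have D := U.divided
  have T := U.ccw
  obtain ⟨⟨_, -⟩, qbx, qcx, qdx⟩ := U.ccw_beyond hx h
  refine (D.ccw_or c x d (hne := by grind [T.bcd, T.rdc])).resolve_right fun cdx ↦ ?_
  have W := U.toDividedPentagon.isEdgeFrom_pq
  rcases D.ccw_or q c d with qcd | qdc
  · exact D.not_inCap (U.lastPair.emptyQuad U.nearest W D qcd).rotate
      ⟨q, U.q_mem, by simp⟩ ⟨b, U.b_mem, by simp⟩ (Finset.mem_union_right A hx)
      ⟨cdx, qdx.rotate, qbx.rotate.rotate⟩
  · exact (qdc.trans' T.qdr qdx T.rdc.rotate rxd.rotate.rotate).not_swap cdx.rotate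

theorem emptyQuad_bdrq (h : ∀ x ∈ B, ¬ InQuad ε b d r q x) :
    EmptyQuad ε (A ∪ B) b d r q := by
  have T := U.ccw
  refine ⟨?_, U.ccw_rbd.rotate, T.qdr.rotate, T.qbr.rotate.rotate, T.qbd, fun x hx hQ ↦ ?_⟩
  · simp [Finset.insert_subset_iff, U.b_mem, U.d_mem, U.r_mem, U.q_mem]
  · rcases Finset.mem_union.1 hx with hxA | hxB
    · have := U.eq_of_mem hxA
      grind [InQuad, T.oqr, T.pqr, T.qrs]
    · exact h x hxB hQ

theorem ccw_rds : Ccw ε r d s := by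
  have D := U.divided
  have T := U.ccw
  refine (D.ccw_or r d s (hne := by grind [T.ors])).resolve_right fun rsd ↦ ?_
  refine D.not_inCap (U.emptyQuad_bdrq fun x hx h ↦ ?_).rotate
    ⟨r, U.r_mem, by simp⟩ ⟨d, U.d_mem, by simp⟩ (Finset.mem_union_left B U.s_mem)
    ⟨rsd.rotate.rotate, T.qrs.rotate, T.qbs.rotate.rotate⟩
  have drx := h.2.1
  have hxW := U.inAngle_of_inQuad_bdrq hx h
  obtain ⟨-, rxs⟩ := U.ccw_of_inAngle_qr hx hxW
  have ros := T.odr.rotate.trans' drx rsd.rotate.rotate hxW.2.rotate.rotate rxs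
  exact T.ors.rotate.not_swap ros

theorem ccw_rcs : Ccw ε r c s := by
  have T := U.ccw
  grind [T.ors, T.ods, T.ocs, U.ccw_rds, T.sdc]

theorem emptyQuad_srdc (h : ∀ x ∈ B, ¬ InQuad ε s r d c x) :
    EmptyQuad ε (A ∪ B) s r d c := by
  have T := U.ccw
  refine ⟨?_, U.ccw_rds.rotate.rotate, T.rdc, T.sdc.rotate, U.ccw_rcs.rotate, fun x hx hQ ↦ ?_⟩
  · simp [Finset.insert_subset_iff, U.c_mem, U.d_mem, U.r_mem, U.s_mem]
  · rcases Finset.mem_union.1 hx with hxA | hxB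
    · have := U.eq_of_mem hxA
      grind [InQuad, T.ors, T.prs, T.qrs]
    · exact h x hxB hQ

theorem emptyQuad_pcdb : EmptyQuad ε (A ∪ B) p c d b := by
  have T := U.ccw
  exact U.lastPair.emptyQuad_fst U.nearest U.isEdgeFrom_pq U.divided U.r_mem ⟨T.opr, T.oqr, T.pqr⟩

theorem ccw_pbx (hx : x ∈ B) (hb : x ≠ b) (cdx : Ccw ε c d x) : Ccw ε p b x := by
  have D := U.divided
  have Q := U.emptyQuad_pcdb
  have hA : ∀ t : Finset Pt, p ∈ t → ∃ a ∈ A, a ∈ t := fun t ht ↦ ⟨p, U.p_mem, ht⟩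
  have hB : ∀ t : Finset Pt, b ∈ t → ∃ a ∈ B, a ∈ t := fun t ht ↦ ⟨b, U.b_mem, ht⟩
  have hx' := Finset.mem_union_right A hx
  refine (D.ccw_or p b x).resolve_right fun pxb ↦ ?_
  rcases D.ccw_or p c x with pcx | pxc
  · rcases D.ccw_or d b x (hne := by grind [U.ccw.bcd]) with dbx | dxb
    · exact Q.empty x hx' ⟨pcx, cdx, dbx, pxb.rotate.rotate⟩
    · exact D.not_inCap Q.rotate (hA _ (by simp)) (hB _ (by simp)) hx'
        ⟨cdx, dxb, pxb.rotate⟩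
  · exact D.not_inCap Q.rotate.rotate.rotate (hA _ (by simp)) (hB _ (by simp)) hx'
      ⟨pxb.rotate.rotate, pxc, cdx.rotate.rotate⟩

theorem ccw_bdx (hx : x ∈ B) (cxd : Ccw ε c x d) (pcx : Ccw ε p c x) : Ccw ε b d x := by
  have D := U.divided
  refine (D.ccw_or b d x (hne := by grind [U.ccw.pcb, U.ccw.bcd])).resolve_right fun bxd ↦ ?_
  exact D.not_inCap U.emptyQuad_pcdb ⟨p, U.p_mem, by simp⟩ ⟨b, U.b_mem, by simp⟩
    (Finset.mem_union_right A hx) ⟨pcx, cxd, bxd.rotate⟩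

theorem ccw_of_inQuad_srdc (hy : y ∈ B) (h : InQuad ε s r d c y) :
    InAngle ε o q s y ∧ Ccw ε p c y ∧ Ccw ε b d y := by
  obtain ⟨sry, -, dcy, csy⟩ := h
  have T := U.ccw
  have D := U.divided
  have soy : Ccw ε s o y :=
    T.ocs.rotate.trans' U.ccw_rcs.rotate csy T.ors.rotate.rotate sry
  have cyp : Ccw ε c y p :=
    csy.trans T.sdc.rotate.rotate T.pcs.rotate dcy.rotate T.pcd.rotate
  have spy : Ccw ε s p y :=
    T.pcs.rotate.trans' U.ccw_rcs.rotate csy T.prs.rotate.rotate sry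
  have pyo : Ccw ε p y o :=
    cyp.rotate.rotate.trans T.pcs T.opc.rotate spy.rotate T.ops.rotate
  have bdy := U.ccw_bdx hy dcy.rotate cyp.rotate.rotate
  have hyW := U.not_inAngle_of_ccw hy bdy.ne.2.1.symm dcy.ne.2.2.symm dcy.ne.2.1.symm
    (.inl cyp.rotate.rotate.not_swap)
  have oqy : Ccw ε o q y := (D.ccw_or o q y (hne := by grind [T.oqr])).resolve_right
    fun oyq ↦ hyW ⟨pyo.rotate.rotate, oyq⟩
  exact ⟨⟨oqy, soy.rotate⟩, cyp.rotate.rotate, bdy⟩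

section EmptyQuad

variable (Q : EmptyQuad ε (A ∪ B) s r d c)
include Q

theorem not_ccw_sry (hy : y ∈ B) (cyd : Ccw ε c y d) (scy : Ccw ε s c y) : ¬ Ccw ε s r y :=
  fun sry ↦ U.divided.not_inCap Q.rotate.rotate ⟨s, U.s_mem, by simp⟩ ⟨c, U.c_mem, by simp⟩
    (Finset.mem_union_right A hy) ⟨cyd.rotate.rotate, scy.rotate, sry.rotate.rotate⟩

theorem not_ccw_pyb_and_pyc (hy : y ∈ B) (hyd : y ≠ d) : ¬ (Ccw ε p y b ∧ Ccw ε p y c) := by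
  rintro ⟨pyb, pyc⟩
  have T := U.ccw
  have D := U.divided
  have cyd : Ccw ε c y d := (D.ccw_or c y d (hne := by grind [T.bcd])).resolve_right
    fun cdy ↦ pyb.not_swap (U.ccw_pbx hy (by grind) cdy)
  have scy : Ccw ε s c y := (D.ccw_or s c y (hne := by grind)).resolve_right fun syc ↦
    cyd.not_swap (T.sdc.rotate.rotate.trans T.pcs.rotate syc.rotate.rotate T.pcd.rotate
      pyc.rotate.rotate)
  have pys : Ccw ε p y s := pyc.of_inside scy.rotate.rotate T.pcs.rotate.rotate
  exact U.not_ccw_sry Q hy cyd scy (T.prs.rotate.rotate.trans T.pcs.rotate.rotate pys.rotate.rotate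
    U.ccw_rcs.rotate.rotate scy)

theorem not_ccw_osy (hy : y ∈ B) (oby : Ccw ε o b y) (sby : Ccw ε s b y) (scy : Ccw ε s c y) :
    ¬ Ccw ε o s y := by
  intro osy
  have T := U.ccw
  have D := U.divided
  have hyd : y ≠ d := fun h ↦ T.sdc.not_swap (h ▸ scy)
  rcases D.ccw_or c d y (hne := by grind [T.sdc]) with cdy | cyd
  · have pby := U.ccw_pbx hy oby.ne.2.2.symm cdy
    rcases D.ccw_or b d y (hne := by grind [T.bcd]) with bdy | byd
    · have dys : Ccw ε d y s := cdy.rotate.of_inside scy.rotate.rotate T.sdc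
      exact T.bds.rotate.not_swap
        (bdy.rotate.trans cdy.rotate dys T.bcd.rotate.rotate T.sdc.rotate)
    · have bdo : Ccw ε b d o := byd.trans sby.rotate oby.rotate T.bds T.obs.rotate
      exact bdo.not_swap
        (oby.rotate.trans pby.rotate byd T.opb.rotate.rotate T.pdb.rotate.rotate)
  · have rsy : Ccw ε r s y := (D.ccw_or r s y (hne := by grind [T.ors])).resolve_right
      fun rys ↦ U.not_ccw_sry Q hy cyd scy rys.rotate.rotate
    have oqy : Ccw ε o q y := T.obq.trans T.obs oby T.oqs osy
    refine D.not_inCap_of_subset U.emptyQuad_oqrs.rotate.rotate U.r_mem (fun z hz hcap ↦ ?_) hy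
      ⟨rsy, osy.rotate, oqy.rotate.rotate⟩
    have := U.eq_of_mem hz
    grind [InCap, T.opq, T.ops]

theorem not_inAngle_oqs (hx : x ∈ B) : ¬ InAngle ε o q s x := by
  intro h
  have T := U.ccw
  have D := U.divided
  have hx' := Finset.mem_union_right A hx
  obtain ⟨⟨-, rxs⟩, -, qcx, qdx⟩ := U.ccw_beyond hx h
  obtain ⟨oqx, oxs⟩ := h
  rcases D.ccw_or r x d (hne := by grind) with rxd | rdx
  · exact D.not_inCap Q ⟨s, U.s_mem, by simp⟩ ⟨c, U.c_mem, by simp⟩ hx'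
      ⟨rxs.rotate.rotate, rxd, (U.ccw_cxd hx ⟨oqx, oxs⟩ rxd).rotate⟩
  rcases D.ccw_or c d x (hne := by grind [T.bcd]) with cdx | cxd
  · have pbx := U.ccw_pbx hx (fun h ↦ T.obq.not_swap (h ▸ oqx)) cdx
    have dxo : Ccw ε d x o := qdx.rotate.of_inside oqx.rotate.rotate T.odq
    have dcq : Ccw ε d c q := cdx.rotate.trans rdx.rotate qdx.rotate T.rdc.rotate T.qdr.rotate
    have dco : Ccw ε d c o := cdx.rotate.trans qdx.rotate dxo dcq T.odq.rotate
    have ocx : Ccw ε o c x := dco.rotate.rotate.trans T.odq dxo.rotate.rotate T.ocq oqx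
    have opx : Ccw ε o p x :=
      T.ops.rotate.rotate.trans' T.ocs.rotate.rotate oxs.rotate.rotate T.opc ocx
    have pcx : Ccw ε p c x := T.opc.trans' T.opb opx T.pcb pbx
    exact dco.rotate.not_swap (T.pcd.trans' pcx T.opc.rotate cdx ocx.rotate)
  · have scx : Ccw ε s c x := (D.ccw_or s c x (hne := by grind)).resolve_right fun sxc ↦
      Q.empty x hx' ⟨rxs.rotate.rotate, rdx, cxd.rotate.rotate, sxc.rotate.rotate⟩
    exact U.not_ccw_sry Q hx cxd scx rxs.rotate.rotate

theorem eq_of_emptyQuad_srdc (hy : y ∈ B) : y = b ∨ y = c ∨ y = d := by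
  by_contra! hne
  obtain ⟨hyb, hyc, hyd⟩ := hne
  have T := U.ccw
  have D := U.divided
  have hR := U.not_ccw_pyb_and_pyc Q hy hyd
  rcases D.ccw_or o p y (hne := by grind [T.opq]) with opy | oyp
  · rcases D.ccw_or o q y (hne := by grind [T.opq]) with oqy | oyq
    · have osy : Ccw ε o s y := (D.ccw_or o s y (hne := by grind [T.ops])).resolve_right
        fun oys ↦ U.not_inAngle_oqs Q hy ⟨oqy, oys⟩
      have oby : Ccw ε o b y := T.opb.trans T.opq opy T.obq oqy
      have ocy : Ccw ε o c y := T.opc.trans T.opq opy T.ocq oqy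
      exact U.not_ccw_osy Q hy oby (D.ccw_across U.o_mem U.s_mem U.b_mem hy T.obs osy oby)
        (D.ccw_across U.o_mem U.s_mem U.c_mem hy T.ocs osy ocy) osy
    · exact hR ⟨(U.nearest.ccw U.isEdgeFrom_pq D hy ⟨opy, oyq⟩ hyb).1,
        (U.lastPair.ccw y hy ⟨opy, oyq⟩ hyb hyc hyd).1⟩
  · rcases U.ccw_or_of_before U.b_mem T.opb T.obs hy oyp with ⟨oby, osy, sby⟩ | ⟨-, pyb⟩ <;>
      rcases U.ccw_or_of_before U.c_mem T.opc T.ocs hy oyp with ⟨ocy, -, scy⟩ | ⟨oyc, pyc⟩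
    · exact U.not_ccw_osy Q hy oby sby scy osy
    · have csy : Ccw ε c s y := T.ocs.rotate.of_inside osy.rotate oyc.rotate
      exact T.obs.rotate.rotate.not_swap
        (T.sbc.rotate.rotate.trans' csy T.ocs.rotate sby osy.rotate)
    · have cyp : Ccw ε c y p := ocy.rotate.of_inside oyp.rotate T.opc.rotate
      exact pyb.not_swap
        (T.pcb.trans T.opc.rotate cyp.rotate.rotate T.opb.rotate oyp.rotate.rotate)
    · exact hR ⟨pyb, pyc⟩

end EmptyQuad

end OuterWedge

/-- An `OuterWedge` with points of `B` in both quadrilaterals `b d r q` and `s r d c` on the segment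
`d r`: the triangle of that segment and `x`, respectively `y`, contains no other such point. -/
structure FlankedOuterWedge (ε : ℝ) (A B : Finset Pt) (o p q r s b c d x y : Pt) : Prop
    extends OuterWedge ε A B o p q r s b c d where
  mem_x : x ∈ B
  mem_y : y ∈ B
  inQuad_x : InQuad ε b d r q x
  inQuad_y : InQuad ε s r d c y
  not_inTriangle_x : ∀ z ∈ B, InQuad ε b d r q z → ¬ InTriangle ε d r x z
  not_inTriangle_y : ∀ z ∈ B, InQuad ε s r d c z → ¬ InTriangle ε r d y z

theorem exists_mem_inQuad_nearest {ε : ℝ} {B : Finset Pt} {p q r s x : Pt} (t u : Pt) (hx : x ∈ B)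
    (h : InQuad ε p q r s x) :
    ∃ y ∈ B, InQuad ε p q r s y ∧ ∀ z ∈ B, InQuad ε p q r s z → ¬ InTriangle ε t u y z := by
  classical
  obtain ⟨y, hy, hmin⟩ := exists_empty_triangle ε t u
    (S := B.filter (InQuad ε p q r s)) ⟨x, Finset.mem_filter.2 ⟨hx, h⟩⟩
  simp only [Finset.mem_filter] at hy hmin
  exact ⟨y, hy.1, hy.2, fun z hz hzQ ↦ hmin z ⟨hz, hzQ⟩⟩

theorem OuterWedge.exists_flanked {ε : ℝ} {A B : Finset Pt} {o p q r s b c d y : Pt}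
    (U : OuterWedge ε A B o p q r s b c d) (hy : y ∈ B) (h : InQuad ε s r d c y) :
    ∃ x y, FlankedOuterWedge ε A B o p q r s b c d x y := by
  obtain ⟨y, hy, hyQ, hymin⟩ := exists_mem_inQuad_nearest r d hy h
  by_cases hx : ∃ x ∈ B, InQuad ε b d r q x
  · obtain ⟨x, hx, hxQ⟩ := hx
    obtain ⟨x, hx, hxQ, hxmin⟩ := exists_mem_inQuad_nearest d r hx hxQ
    exact ⟨x, y, U, hx, hy, hxQ, hyQ, hxmin, hymin⟩
  · push Not at hx
    obtain ⟨hyW, -, bdy⟩ := U.ccw_of_inQuad_srdc hy hyQ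
    exact absurd ⟨bdy, hyQ.2.1.rotate, (U.ccw_beyond hy hyW).1.1.rotate⟩
      (U.divided.not_inCap (U.emptyQuad_bdrq hx) ⟨r, U.r_mem, by simp⟩ ⟨b, U.b_mem, by simp⟩
        (Finset.mem_union_right A hy))

attribute [grind →] FlankedOuterWedge.toOuterWedge

namespace FlankedOuterWedge

variable {ε : ℝ} {A B : Finset Pt} {o p q r s b c d x y z : Pt}
  (F : FlankedOuterWedge ε A B o p q r s b c d x y)
include F

theorem inAngle_x : InAngle ε o q r x := F.inAngle_of_inQuad_bdrq F.mem_x F.inQuad_x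

theorem inAngle_oqs_x : InAngle ε o q s x :=
  ⟨F.inAngle_x.1, F.inAngle_x.1.trans F.ccw.oqr F.ccw.oqs F.inAngle_x.2 F.ccw.ors⟩

theorem ccw_dyx : Ccw ε d y x := by
  obtain ⟨bdx, drx, -, -⟩ := F.inQuad_x
  obtain ⟨-, -, bdy⟩ := F.ccw_of_inQuad_srdc F.mem_y F.inQuad_y
  exact bdy.trans' F.ccw_rbd.rotate bdx F.inQuad_y.2.1.rotate drx

theorem ccw_rxy : Ccw ε r x y := by
  obtain ⟨-, drx, rqx, -⟩ := F.inQuad_x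
  obtain ⟨hyW, -, -⟩ := F.ccw_of_inQuad_srdc F.mem_y F.inQuad_y
  obtain ⟨⟨qyr, -⟩, -⟩ := F.ccw_beyond F.mem_y hyW
  exact rqx.trans F.ccw.qdr.rotate.rotate qyr.rotate.rotate drx.rotate F.inQuad_y.2.1

theorem not_inQuad_rxdy_of_mem (hz : z ∈ A) : ¬ InQuad ε r x d y z := by
  rintro ⟨-, xdz, -, yrz⟩
  have T := F.ccw
  obtain ⟨bdx, drx, -, -⟩ := F.inQuad_x
  obtain ⟨⟨-, rys⟩, -⟩ := F.ccw_beyond F.mem_y (F.ccw_of_inQuad_srdc F.mem_y F.inQuad_y).1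
  obtain ⟨-, -, -, qdx⟩ := F.ccw_beyond F.mem_x F.inAngle_oqs_x
  rcases F.eq_of_mem hz with rfl | rfl | rfl | rfl | rfl
  · exact T.odq.rotate.not_swap
      (T.odr.rotate.trans drx T.qdr.rotate xdz.rotate qdx.rotate)
  · exact bdx.rotate.not_swap
      (F.ccw_rbd.rotate.rotate.trans T.pdr.rotate drx T.pdb.rotate xdz.rotate)
  · exact qdx.rotate.not_swap xdz.rotate
  · exact not_ccw_self yrz
  · exact rys.not_swap yrz.rotate

theorem emptyQuad_rxdy : EmptyQuad ε (A ∪ B) r x d y := by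
  obtain ⟨bdx, drx, rqx, qbx⟩ := id F.inQuad_x
  obtain ⟨sry, rdy, dcy, csy⟩ := id F.inQuad_y
  have T := F.ccw
  have hx := F.mem_x
  have hy := F.mem_y
  refine ⟨?_, drx.rotate, F.ccw_dyx.rotate.rotate, rdy.rotate, F.ccw_rxy.rotate.rotate,
    fun z hz ⟨rxz, xdz, dyz, yrz⟩ ↦ ?_⟩
  · grind
  rcases Finset.mem_union.1 hz with hzA | hzB
  · exact F.not_inQuad_rxdy_of_mem hzA ⟨rxz, xdz, dyz, yrz⟩
  rcases F.divided.ccw_or r d z (hne := by grind [T.qdr]) with rdz | rzd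
  · have hT : InTriangle ε r d y z := ⟨rdz, dyz, yrz⟩
    refine F.not_inTriangle_y z hzB ⟨?_, rdz, ?_, ?_⟩ hT
    · exact (rdz.trans rdy F.ccw_rds yrz.rotate sry.rotate).rotate.rotate
    · exact (T.rdc.trans' rdy rdz dcy dyz).rotate.rotate.rotate
    · exact .of_inTriangle hT F.ccw_rcs.rotate T.sdc.rotate.rotate csy
  · have hT : InTriangle ε d r x z := ⟨rzd.rotate.rotate, rxz, xdz⟩
    refine F.not_inTriangle_x z hzB ⟨?_, rzd.rotate.rotate, ?_, ?_⟩ hT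
    · exact (rzd.rotate.rotate.trans drx F.ccw_rbd.rotate.rotate xdz.rotate
        bdx.rotate).rotate.rotate
    · exact T.qdr.rotate.trans' drx rzd.rotate.rotate rqx rxz
    · exact .of_inTriangle hT T.qbd T.qbr qbx

theorem inAngle_y : InAngle ε o q r y := by
  obtain ⟨sry, -, dcy, -⟩ := id F.inQuad_y
  have T := F.ccw
  have D := F.divided
  have hy := F.mem_y
  obtain ⟨⟨oqy, -⟩, -, -⟩ := F.ccw_of_inQuad_srdc hy F.inQuad_y
  refine ⟨oqy, (D.ccw_or o y r (hne := by grind [T.oqr])).resolve_right fun ory ↦ ?_⟩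
  have rcy : Ccw ε r c y := (D.ccw_or r c y (hne := by grind [T.rdc])).resolve_right fun ryc ↦ by
    have rco : Ccw ε r c o :=
      ryc.trans sry.rotate ory.rotate F.ccw_rcs T.ors.rotate
    exact T.ocr.rotate.rotate.not_swap rco
  have cxd : Ccw ε c x d := F.ccw_cxd F.mem_x F.inAngle_oqs_x F.inQuad_x.2.1.rotate
  exact D.not_inCap F.emptyQuad_rxdy.rotate ⟨r, F.r_mem, by simp⟩ ⟨d, F.d_mem, by simp⟩
    (Finset.mem_union_right A F.c_mem) ⟨cxd.rotate, dcy, rcy.rotate⟩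

theorem eq_of_inAngle (hz : z ∈ B) (h : InAngle ε o q r z) : z = x ∨ z = y := by
  classical
  have T := F.ccw
  have hcard := F.isEdgeFrom_qr.card_le_two F.divided (S := B.filter (InAngle ε o q r))
    (fun _ ↦ Finset.mem_filter) F.s_mem ⟨T.oqs, T.ors, T.qrs⟩ F.p_mem ⟨T.opq, T.opr, T.pqr.rotate⟩
  have hxy : ({x, y} : Finset Pt) ⊆ B.filter (InAngle ε o q r) := by
    simp [Finset.insert_subset_iff, F.mem_x, F.mem_y, F.inAngle_x, F.inAngle_y]
  have heq := Finset.eq_of_subset_of_card_le hxy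
    (by rwa [Finset.card_pair F.ccw_dyx.ne.2.2.symm])
  simpa using heq.ge (Finset.mem_filter.2 ⟨hz, h⟩)

theorem ccw_qyx : Ccw ε q y x := by
  have T := F.ccw
  have D := F.divided
  have hx := F.mem_x
  have hy := F.mem_y
  obtain ⟨oqx, oxr⟩ := F.inAngle_x
  have qxr := (F.ccw_of_inAngle_qr hx F.inAngle_x).1
  have Q : EmptyQuad ε (A ∪ B) o q x r := by
    refine ⟨by grind, oqx, qxr, oxr.rotate, T.oqr.rotate.rotate,
      fun z hz ⟨oqz, qxz, xrz, roz⟩ ↦ ?_⟩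
    rcases Finset.mem_union.1 hz with hzA | hzB
    · exact F.isEdgeFrom_qr.not_inAngle hzA ⟨oqz, roz.rotate⟩
    · rcases F.eq_of_inAngle hzB ⟨oqz, roz.rotate⟩ with rfl | rfl
      · exact not_ccw_self qxz
      · exact F.ccw_rxy.not_swap xrz.rotate
  refine (D.ccw_or q y x (hne := by grind [F.ccw_rxy])).resolve_right fun qxy ↦ ?_
  exact D.not_inCap Q.rotate ⟨q, F.q_mem, by simp⟩ ⟨x, hx, by simp⟩ (Finset.mem_union_right A hy)
    ⟨qxy, F.ccw_rxy.rotate, F.inAngle_y.2.rotate⟩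

theorem ccw_of_inQuad_bdyq (h : InQuad ε b d y q z) :
    Ccw ε o p z ∧ Ccw ε o z r ∧ Ccw ε p c z := by
  obtain ⟨bdz, dyz, yqz, qbz⟩ := h
  obtain ⟨-, rdy, dcy, -⟩ := id F.inQuad_y
  have T := F.ccw
  obtain ⟨hyW, pcy, bdy⟩ := F.ccw_of_inQuad_srdc F.mem_y F.inQuad_y
  obtain ⟨⟨qyr, -⟩, qby, qcy, qdy⟩ := F.ccw_beyond F.mem_y hyW
  have oyr := F.inAngle_y.2
  have yrz : Ccw ε y r z := rdy.rotate.trans' qdy.rotate dyz qyr.rotate yqz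
  have qzr : Ccw ε q z r := qbz.trans qby T.qbr yqz.rotate qyr
  have roz : Ccw ε r o z :=
    oyr.rotate.trans' qyr.rotate yrz T.oqr.rotate.rotate qzr.rotate.rotate
  have yzc : Ccw ε y z c := yqz.trans qdy.rotate.rotate qcy.rotate.rotate dyz.rotate
    dcy.rotate.rotate
  have bcy : Ccw ε b c y := T.qbc.trans' T.qbd qby T.bcd bdy
  have bcz : Ccw ε b c z := T.qbc.trans' T.qbd qbz T.bcd bdz
  have czp : Ccw ε c z p :=
    yzc.rotate.rotate.trans bcy.rotate pcy.rotate bcz.rotate T.pcb.rotate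
  have rpy : Ccw ε r p y := T.opr.rotate.rotate.trans T.odr.rotate.rotate oyr.rotate.rotate
    T.pdr.rotate.rotate rdy
  have rpz : Ccw ε r p z :=
    rpy.rotate.rotate.trans' qyr.rotate yrz T.pqr.rotate.rotate qzr.rotate.rotate
  have pzo : Ccw ε p z o :=
    czp.rotate.rotate.trans T.pcr T.opc.rotate rpz.rotate T.opr.rotate
  exact ⟨pzo.rotate.rotate, roz.rotate, czp.rotate.rotate⟩

theorem emptyQuad_bdyq : EmptyQuad ε (A ∪ B) b d y q := by
  have T := F.ccw
  have D := F.divided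
  have hy := F.mem_y
  obtain ⟨hyW, -, bdy⟩ := F.ccw_of_inQuad_srdc hy F.inQuad_y
  obtain ⟨⟨qyr, rys⟩, qby, -, qdy⟩ := F.ccw_beyond hy hyW
  refine ⟨by grind, bdy, qdy.rotate, qby.rotate.rotate, T.qbd, fun z hz h ↦ ?_⟩
  obtain ⟨opz, ozr, pcz⟩ := F.ccw_of_inQuad_bdyq h
  obtain ⟨bdz, -, yqz, qbz⟩ := h
  rcases Finset.mem_union.1 hz with hzA | hzB
  · rcases F.eq_of_mem hzA with rfl | rfl | rfl | rfl | rfl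
    · exact T.obq.not_swap qbz.rotate.rotate
    · exact T.pbq.not_swap qbz.rotate.rotate
    · exact not_ccw_self yqz
    · exact qyr.not_swap yqz.rotate
    · exact T.ors.not_swap ozr
  have hzc : z ≠ c := fun h ↦ not_ccw_self (h ▸ pcz)
  have hzW := F.not_inAngle_of_ccw hzB bdz.ne.2.1.symm hzc bdz.ne.2.2.symm (.inl pcz.not_swap)
  have oqz : Ccw ε o q z := (D.ccw_or o q z (hne := by grind [T.oqr])).resolve_right
    fun ozq ↦ hzW ⟨opz, ozq⟩
  rcases F.eq_of_inAngle hzB ⟨oqz, ozr⟩ with rfl | rfl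
  · exact F.ccw_qyx.not_swap yqz.rotate
  · exact yqz.ne.2.1 rfl

end FlankedOuterWedge

theorem not_flankedOuterWedge {ε : ℝ} {A B : Finset Pt} {o p q r s b c d x y : Pt} :
    ¬ FlankedOuterWedge ε A B o p q r s b c d x y := by
  intro F
  exact F.divided.not_inCap F.emptyQuad_bdyq.rotate ⟨q, F.q_mem, by simp⟩ ⟨b, F.b_mem, by simp⟩
    (Finset.mem_union_right A F.mem_x) ⟨F.ccw_dyx, F.ccw_qyx.rotate, F.inQuad_x.2.2.2.rotate.rotate⟩

theorem not_outerWedge {ε : ℝ} {A B : Finset Pt} {o p q r s b c d : Pt} (hB : 4 ≤ B.card) :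
    ¬ OuterWedge ε A B o p q r s b c d := by
  intro U
  by_cases h : ∃ y ∈ B, InQuad ε s r d c y
  · obtain ⟨y, hy, hyQ⟩ := h
    obtain ⟨x, y, F⟩ := U.exists_flanked hy hyQ
    exact not_flankedOuterWedge F
  · push Not at h
    have hsub : B ⊆ {b, c, d} := fun y hy ↦ by
      simpa using U.eq_of_emptyQuad_srdc (U.emptyQuad_srdc h) hy
    have := (Finset.card_le_card hsub).trans Finset.card_le_three
    omega

theorem DividedPentagon.card_le_two {ε : ℝ} {A B S : Finset Pt} {o p q r s : Pt}
    (V : DividedPentagon ε A B o p q r s) (hB : 4 ≤ B.card)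
    (hS : ∀ y, y ∈ S ↔ y ∈ B ∧ InAngle ε o p q y) : S.card ≤ 2 := by
  by_contra! hcard
  obtain ⟨b, N⟩ := exists_isNearest hS (Finset.card_pos.1 (by omega))
  obtain ⟨c, d, L⟩ := N.exists_isLastPair V.isEdgeFrom_pq V.divided hS hcard
  exact not_outerWedge hB ⟨V, N, L⟩

section ConvexPosition

variable {ε : ℝ} {A B S : Finset Pt} {o p q r s x y z : Pt}

theorem ConvexPos.not_inTriangle {S : Set Pt} (h : ConvexPos S) (hp : p ∈ S) (hq : q ∈ S)
    (hr : r ∈ S) (hx : x ∈ S) : ¬ InTriangle ε p q r x := fun hT ↦ by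
  refine h x hx (convexHull_mono ?_ hT.mem_convexHull)
  simp only [Set.insert_subset_iff, Set.singleton_subset_iff]
  exact ⟨⟨hp, hT.1.ne.2.1⟩, ⟨hq, hT.1.ne.2.2⟩, hr, hT.2.1.ne.2.2⟩

theorem Divided.ccw_of_star (D : Divided ε A B) (h : ConvexPos (A : Set Pt)) (ho : o ∈ A)
    (hx : x ∈ A) (hy : y ∈ A) (hz : z ∈ A) (oxy : Ccw ε o x y) (oyz : Ccw ε o y z) :
    Ccw ε x y z := by
  refine (D.ccw_or x y z).resolve_right fun xzy ↦ ?_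
  exact h.not_inTriangle ho hx hz hy ⟨oxy, xzy, oyz.rotate.rotate⟩

theorem inAngle_neg : InAngle (-ε) o q p x ↔ InAngle ε o p q x := by
  rw [InAngle, InAngle, ccw_neg, ccw_neg, and_comm]

theorem after_neg : After (-ε) o q p z ↔ Before ε o p q z := by
  rw [After, Before, ccw_neg, ccw_neg, ccw_neg, ccw_rotate (p := p), ccw_rotate (p := q) (q := z)]
  tauto

theorem before_neg : Before (-ε) o q p z ↔ After ε o p q z := by
  rw [← neg_neg ε, after_neg, neg_neg]

theorem IsEdgeFrom.neg (W : IsEdgeFrom ε A o p q) : IsEdgeFrom (-ε) A o q p where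
  apex_mem := W.apex_mem
  fst_mem := W.snd_mem
  snd_mem := W.fst_mem
  opq := ccw_neg.2 W.opq
  after_or_before z hz hz' := by
    rw [after_neg, before_neg, or_comm]
    exact W.after_or_before z hz (by rwa [Finset.pair_comm])

theorem IsEdgeFrom.dividedPentagon_or (W : IsEdgeFrom ε A o p q) (D : Divided ε A B)
    (h : ConvexPos (A : Set Pt)) (hA : A = {o, p, q, r, s}) (hrs : r ≠ s)
    (hr : After ε o p q r) (hs : After ε o p q s) :
    DividedPentagon ε A B o p q r s ∨ DividedPentagon ε A B o p q s r := by
  obtain ⟨ho, hp, hq, opq, -⟩ := W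
  have hrA : r ∈ A := by simp [hA]
  have hsA : s ∈ A := by simp [hA]
  obtain ⟨opr, oqr, pqr⟩ := hr
  obtain ⟨ops, oqs, pqs⟩ := hs
  rcases D.ccw_or o r s with ors | osr
  · exact .inl ⟨D, ⟨opq, opr, ops, oqr, oqs, ors, pqr, pqs,
      D.ccw_of_star h ho hp hrA hsA opr ors, D.ccw_of_star h ho hq hrA hsA oqr ors⟩, hA⟩
  · exact .inr ⟨D, ⟨opq, ops, opr, oqs, oqr, osr, pqs, pqr,
      D.ccw_of_star h ho hp hsA hrA ops osr, D.ccw_of_star h ho hq hsA hrA oqs osr⟩,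
      by rw [hA, Finset.pair_comm r s]⟩

theorem IsEdgeFrom.card_le_two_of_card_eq_five (W : IsEdgeFrom ε A o p q) (D : Divided ε A B)
    (h : ConvexPos (A : Set Pt)) (hA : A.card = 5) (hB : 4 ≤ B.card)
    (hS : ∀ y, y ∈ S ↔ y ∈ B ∧ InAngle ε o p q y) : S.card ≤ 2 := by
  classical
  have hsub : {o, p, q} ⊆ A := by
    simp [Finset.insert_subset_iff, W.apex_mem, W.fst_mem, W.snd_mem]
  have hthree : ({o, p, q} : Finset Pt).card = 3 := Finset.card_eq_three.2
    ⟨o, p, q, W.opq.ne.1, W.opq.ne.2.1, W.opq.ne.2.2, rfl⟩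
  obtain ⟨r, s, hrs, hrest⟩ := Finset.card_eq_two.1
    (show (A \ {o, p, q}).card = 2 by rw [Finset.card_sdiff_of_subset hsub]; omega)
  have hA' : A = {o, p, q, r, s} := by
    have hunion := Finset.union_sdiff_of_subset hsub
    rw [hrest] at hunion
    grind
  obtain ⟨hrA, hr⟩ := Finset.mem_sdiff.1 (show r ∈ A \ {o, p, q} by simp [hrest])
  obtain ⟨hsA, hs⟩ := Finset.mem_sdiff.1 (show s ∈ A \ {o, p, q} by simp [hrest])
  rcases W.after_or_before r hrA hr with hr | hr <;>
    rcases W.after_or_before s hsA hs with hs | hs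
  · rcases W.dividedPentagon_or D h hA' hrs hr hs with V | V <;> exact V.card_le_two hB hS
  · exact W.card_le_two D hS hrA hr hsA hs
  · exact W.card_le_two D hS hsA hs hrA hr
  · have hA'' : A = {o, q, p, r, s} := by rw [hA', Finset.insert_comm p q]
    rcases W.neg.dividedPentagon_or D.neg h hA'' hrs (after_neg.2 hr) (after_neg.2 hs)
      with V | V <;>
    exact V.card_le_two hB (by simpa only [inAngle_neg] using hS)

end ConvexPosition

section AWedge

variable {A B : Finset Pt} {a p q x : Pt}

theorem not_convex_wedge (h : Ccw 1 a p q) : ¬ Convex ℝ (Wedge a p q) := by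
  intro hconv
  rw [Ccw, signedArea, one_mul] at h
  have hreflex : Wedge a p q = {x | cross2 (p - a) (x - a) ≤ 0 ∨ 0 ≤ cross2 (q - a) (x - a)} :=
    if_neg h.not_ge
  rw [hreflex] at hconv
  have hp : cross2 (p - a) (p - a) ≤ 0 := by rw [cross2, mul_comm, sub_self]
  have hq : 0 ≤ cross2 (q - a) (q - a) := by rw [cross2, mul_comm, sub_self]
  have hmid := hconv (.inl hp) (.inr hq) one_half_pos.le one_half_pos.le (add_halves 1)
  simp only [cross2, Set.mem_ofPred_eq, Prod.fst_add, Prod.snd_add, Prod.smul_fst, Prod.smul_snd,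
    Prod.fst_sub, Prod.snd_sub, smul_eq_mul] at h hmid
  rcases hmid with hmid | hmid <;> linarith

theorem mem_wedge_iff (h : Ccw 1 a q p) :
    x ∈ Wedge a p q ↔ 0 ≤ signedArea 1 a q x ∧ 0 ≤ signedArea 1 a x p := by
  rw [Ccw, signedArea_swap, signedArea, one_mul, neg_pos] at h
  rw [Wedge, if_pos h.le, signedArea_swap (q := p), and_comm]
  simp [signedArea]

theorem Divided.mem_wedge_iff_inAngle (D : Divided 1 A B) (ha : a ∈ A) (hp : p ∈ A) (hq : q ∈ A)
    (h : Ccw 1 a q p) (hx : x ∈ B) : x ∈ Wedge a p q ↔ InAngle 1 a q p x := by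
  rw [mem_wedge_iff h]
  have hax := D.ne_of_mem ha hx
  refine ⟨fun h' ↦ ⟨?_, ?_⟩, fun h' ↦ ⟨h'.1.le, h'.2.le⟩⟩
  · refine (D.ccw_or a q x (by simp [*]) ⟨h.ne.1, hax, D.ne_of_mem hq hx⟩).resolve_right ?_
    rw [Ccw, signedArea_swap]
    linarith [h'.1]
  · refine (D.ccw_or a x p (by simp [*]) ⟨hax, h.ne.2.1, (D.ne_of_mem hp hx).symm⟩).resolve_right ?_
    rw [Ccw, signedArea_swap]
    linarith [h'.2]

theorem Divided.isEdgeFrom_of_inter_wedge_subset (D : Divided 1 A B)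
    (hconv : ConvexPos (A : Set Pt)) (ha : a ∈ A) (hp : p ∈ A) (hq : q ∈ A) (h : Ccw 1 a q p)
    (hW : (A : Set Pt) ∩ Wedge a p q ⊆ {a, p, q}) : IsEdgeFrom 1 A a q p := by
  refine ⟨ha, hq, hp, h, fun z hz hz' ↦ ?_⟩
  simp only [Finset.mem_insert, Finset.mem_singleton, not_or] at hz'
  obtain ⟨hza, hzq, hzp⟩ := hz'
  rcases D.ccw_or a q z with aqz | azq <;> rcases D.ccw_or a p z with apz | azp
  · exact .inl ⟨aqz, apz, D.ccw_of_star hconv ha hq hp hz h apz⟩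
  · have := hW ⟨hz, (mem_wedge_iff h).2 ⟨aqz.le, azp.le⟩⟩
    simp [*] at this
  · exact absurd ⟨h.rotate, apz.rotate, azq.rotate⟩ (hconv.not_inTriangle hq hp hz ha)
  · exact .inr ⟨azq, azp, (D.ccw_of_star hconv ha hz hq hp azq h).rotate⟩

end AWedge

theorem convex_wedge_at_most_two_I_general
    (v : Pt) (c : ℝ) (A B : Finset Pt)
    (hA : ∀ p ∈ A, dotp v p < c) (hB : ∀ p ∈ B, c < dotp v p)
    (hgen : GenPos (↑(A ∪ B) : Set Pt))
    (hnh : ¬ ∃ H : Finset Pt, DividedFiveHole A B H)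
    (hAcard : A.card = 5) (hB4 : 4 ≤ B.card)
    (hAconv : ConvexPos (↑A : Set Pt)) :
    ∀ a ∈ A, ∀ W : Set Pt, IsAWedge A a W → Convex ℝ W →
      ((↑B : Set Pt) ∩ W).ncard ≤ 2 := by
  classical
  rintro a ha _ ⟨p, hp, q, hq, hpq, rfl, hempty⟩ hconv
  rw [Finset.mem_erase] at hp hq
  have D : Divided 1 A B := ⟨one_ne_zero, hgen, ⟨v, c, hA, hB⟩, hnh⟩
  have aqp : Ccw 1 a q p := (D.ccw_or a q p).resolve_right fun apq ↦ not_convex_wedge apq hconv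
  have W := D.isEdgeFrom_of_inter_wedge_subset hAconv ha hp.2 hq.2 aqp hempty
  have hBW : (↑B ∩ Wedge a p q : Set Pt) = ↑(B.filter (InAngle 1 a q p)) := by
    ext x
    simp +contextual [D.mem_wedge_iff_inAngle ha hp.2 hq.2 aqp]
  rw [hBW, Set.ncard_coe_finset]
  exact W.card_le_two_of_card_eq_five D hAconv hAcard hB4 fun _ ↦ Finset.mem_filter

/-- **Lemma 10.** Let `P = A ∪ B` be an `ℓ`-divided set with no `ℓ`-divided 5-hole,
`|A| = 5`, `4 ≤ |B| ≤ 6`, and `A` in convex position. Then for every point `a` of `A`,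
every convex `a`-wedge contains at most two points of `B`. -/
theorem convex_wedge_at_most_two_I
    (v : Pt) (hv : v ≠ 0) (c : ℝ) (A B : Finset Pt)
    (hA : ∀ p ∈ A, dotp v p < c) (hB : ∀ p ∈ B, c < dotp v p)
    (hBne : B.Nonempty)
    (hgen : GenPos (↑(A ∪ B) : Set Pt))
    (hnh : ¬ ∃ H : Finset Pt, DividedFiveHole A B H)
    (hAcard : A.card = 5) (hB4 : 4 ≤ B.card) (hB6 : B.card ≤ 6)
    (hAconv : ConvexPos (↑A : Set Pt)) :
    ∀ a ∈ A, ∀ W : Set Pt, IsAWedge A a W → Convex ℝ W →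
      ((↑B : Set Pt) ∩ W).ncard ≤ 2 :=
  convex_wedge_at_most_two_I_general v c A B hA hB hgen hnh hAcard hB4 hAconv

end
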